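/- arXiv:math/0102057 — 6 statements merged into one kernel-verified Lean document; each statement's English description precedes it below -/
import Mathlib

section
/- There exists a family (G_α)_{α ∈ I} of subgroups of the Baer–Specker group ℤ^ω, indexed by a set I of cardinality 2^{ℵ₁}, such that: (i) each G_α is a pure subgroup of ℤ^ω; (ii) each G_α has cardinality ℵ₁; (iii) no G_α is free; and (iv) whenever α ≠ β, the groups G_α and G_β are almost disjoint — in particular G_α ∩ G_β is free and G_α is not isomorphic to G_β. -/
/-!
Let `b i` be infinite sets of primes with pairwise finite intersections, and for each `i` let `x i`
be an integral sequence which, modulo finitely supported sequences, is divisible by all the primes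
in `b i`. The sequences that are rational combinations of the `x i` modulo finitely supported ones
form a pure subgroup `G b` of `ℤ^ω`, with coordinates in `⊕ ℚ` whose `i`-th denominator is a product
of distinct primes from `b i`. If there are uncountably many `i`, then `G b` is not free: a basis
would yield some `x i` with a nonzero coordinate divisible by every prime in `b i`.

If `H` embeds into both `G b` and `G b'`, it has two coordinate systems. When all intersections
`b i ∩ b' j` are finite, a subgroup whose coordinates involve only finitely many `i` and `j` is
mapped by one integer `D ≠ 0` into the sum of its two integral lattices, so it is finitely
generated; hence countable groups with two such injective coordinate systems are free, by
Pontryagin's criterion. A subgroup of `H` that is determined by its index sets in both systems has a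
larger such subgroup containing any given element, with countable, hence free, quotient; by Zorn's
lemma `H` is free, the countable initial step being Specker's theorem. Countably many `i` with some
`b i ∩ b' j` infinite do no harm, since dropping their coordinates keeps the kernel countable.

Finally, each `η ⊆ ω₁` gives a family indexed by `ω₁`: code the initial segments of `η` by branches
of the binary tree, and these by sets of primes. Distinct `η` share only countably many initial
segments.
-/

namespace BaerSpecker

section Basis

variable {R M : Type*} [Ring R] [AddCommGroup M] [Module R M]

/-- The set `B` is a basis of the submodule `N`. Bases are sets here, so that those of an increasing
family of submodules can be compared by inclusion. -/
structure IsBasisOf (B : Set M) (N : Submodule R M) : Prop where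
  linearIndepOn : LinearIndepOn R id B
  span_eq : Submodule.span R B = N

lemma isBasisOf_empty : IsBasisOf ∅ (⊥ : Submodule R M) :=
  ⟨linearIndepOn_empty R id, Submodule.span_empty⟩

lemma IsBasisOf.free {B : Set M} (h : IsBasisOf B (⊤ : Submodule R M)) : Module.Free R M :=
  Module.Free.of_basis (Module.Basis.mk h.linearIndepOn (by simp [h.span_eq]))

lemma exists_isBasisOf (N : Submodule R M) [Module.Free R N] : ∃ B : Set M, IsBasisOf B N := by
  let b := Module.Free.chooseBasis R N
  refine ⟨Set.range fun k => (b k : M), ?_, ?_⟩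
  · exact (b.linearIndependent.map' N.subtype N.ker_subtype).linearIndepOn_id
  · have h := congrArg (Submodule.map N.subtype) b.span_eq
    rwa [Submodule.map_span, ← Set.range_comp, Submodule.map_subtype_top] at h

lemma isBasisOf_iUnion_of_directed {κ : Type*} {B : κ → Set M} {N : κ → Submodule R M}
    (hdir : Directed (· ⊆ ·) B) (h : ∀ k, IsBasisOf (B k) (N k)) :
    IsBasisOf (⋃ k, B k) (⨆ k, N k) where
  linearIndepOn := linearIndepOn_iUnion_of_directed hdir fun k => (h k).linearIndepOn
  span_eq := by simp_rw [Submodule.span_iUnion, (h _).span_eq]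

lemma IsBasisOf.exists_extension {B : Set M} {N P : Submodule R M} (hB : IsBasisOf B N)
    (hNP : N ≤ P) [Module.Free R (P.map N.mkQ)] : ∃ B', B ⊆ B' ∧ IsBasisOf B' P := by
  obtain ⟨D, hD⟩ := exists_isBasisOf (P.map N.mkQ)
  choose c hc using N.mkQ_surjective
  have hcomp : N.mkQ ∘ (fun d : D => c d) = Subtype.val := funext fun d => hc d
  have hind : LinearIndependent R (Sum.elim (fun x : B => (x : M)) fun d : D => c d) := by
    have hBN : LinearIndependent R
        fun x : B => (⟨x, hB.span_eq.le (Submodule.subset_span x.2)⟩ : N) :=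
      LinearIndependent.of_comp N.subtype hB.linearIndepOn
    have hcN : LinearIndependent R (N.mkQ ∘ fun d : D => c d) := by
      rw [hcomp]
      exact hD.linearIndepOn
    exact hBN.sumElim_of_quotient (fun d : D => c d) hcN
  have hmap : (Submodule.span R (Set.range fun d : D => c d)).map N.mkQ = P.map N.mkQ := by
    rw [Submodule.map_span, ← Set.range_comp, hcomp, Subtype.range_coe, hD.span_eq]
  refine ⟨B ∪ Set.range fun d : D => c d, Set.subset_union_left, ?_, ?_⟩
  · simpa only [Set.Sum.elim_range, Subtype.range_coe] using hind.linearIndepOn_id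
  · have h := congrArg (Submodule.comap N.mkQ) hmap
    rw [Submodule.comap_map_mkQ, Submodule.comap_map_mkQ, sup_eq_right.2 hNP] at h
    rw [Submodule.span_union, hB.span_eq, h]

lemma free_of_free_quotients_of_nat {N : ℕ → Submodule R M} (hmono : Monotone N) (hbot : N 0 = ⊥)
    (htop : ⨆ n, N n = ⊤) (hfree : ∀ n, Module.Free R ((N (n + 1)).map (N n).mkQ)) :
    Module.Free R M := by
  choose ext hsub hext using fun n (B : {B // IsBasisOf B (N n)}) =>
    B.2.exists_extension (hmono n.le_succ)
  let B (n : ℕ) : {B // IsBasisOf B (N n)} :=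
    n.rec ⟨∅, hbot ▸ isBasisOf_empty⟩ fun n B => ⟨ext n B, hext n B⟩
  have hB : Monotone fun n => (B n).1 := monotone_nat_of_le_succ fun n => hsub n (B n)
  have hbasis := isBasisOf_iUnion_of_directed hB.directed_le fun n => (B n).2
  exact (htop ▸ hbasis).free

lemma free_of_free_quotients_of_chain_closed {𝒞 : Set (Submodule R M)}
    (hchain : ∀ c ⊆ 𝒞, c.Nonempty → IsChain (· ≤ ·) c → sSup c ∈ 𝒞)
    (hinit : ∃ N ∈ 𝒞, Module.Free R N)
    (hext : ∀ N ∈ 𝒞, ∀ m, ∃ P ∈ 𝒞, N ≤ P ∧ m ∈ P ∧ Module.Free R (P.map N.mkQ)) :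
    Module.Free R M := by
  let 𝒮 : Set (Set M) := {B | Submodule.span R B ∈ 𝒞 ∧ LinearIndepOn R id B}
  have hbasis {B : Set M} (hB : B ∈ 𝒮) : IsBasisOf B (Submodule.span R B) := ⟨hB.2, rfl⟩
  obtain ⟨B₀, hB₀⟩ : 𝒮.Nonempty := by
    obtain ⟨N, hN, _⟩ := hinit
    obtain ⟨B, hB⟩ := exists_isBasisOf N
    exact ⟨B, hB.span_eq ▸ hN, hB.linearIndepOn⟩
  obtain ⟨B, -, hB⟩ := zorn_subset_nonempty 𝒮 (fun c hc hchain' hne => by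
    have hspan : Submodule.span R (⋃₀ c) = sSup (Submodule.span R '' c) := by
      rw [Set.sUnion_eq_biUnion, Submodule.span_iUnion₂, sSup_image]
    refine ⟨⋃₀ c, ⟨?_, ?_⟩, fun B hB => Set.subset_sUnion_of_mem hB⟩
    · rw [hspan]
      exact hchain _ (Set.image_subset_iff.2 fun B hB => (hc hB).1) (hne.image _)
        (Submodule.span_monotone.isChain_image hchain')
    · exact linearIndepOn_sUnion_of_directed hchain'.directedOn fun B hB => (hc hB).2) B₀ hB₀
  suffices Submodule.span R B = ⊤ from (this ▸ hbasis hB.prop).free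
  refine eq_top_iff.2 fun m _ => ?_
  obtain ⟨P, hP, hle, hmP, _⟩ := hext _ hB.prop.1 m
  obtain ⟨B', hBB', hB'⟩ := (hbasis hB.prop).exists_extension hle
  have hB'S : B' ∈ 𝒮 := ⟨hB'.span_eq.symm ▸ hP, hB'.linearIndepOn⟩
  rwa [hB.eq_of_subset hB'S hBB', hB'.span_eq]

end Basis

section Pontryagin

variable {R K : Type*} [CommRing R] [IsDomain R] [Field K] [Algebra R K] [FaithfulSMul R K]

lemma isTorsionFree_quotient_comap {M W : Type*} [AddCommGroup M] [Module R M] [AddCommGroup W]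
    [Module R W] [Module K W] [IsScalarTower R K W] (V : Submodule K W) (φ : M →ₗ[R] W) :
    Module.IsTorsionFree R (M ⧸ (V.restrictScalars R).comap φ) := by
  refine Module.isTorsionFree_iff_smul_eq_zero.2 fun r x hx => or_iff_not_imp_left.2 fun hr => ?_
  obtain ⟨m, rfl⟩ := Submodule.mkQ_surjective _ x
  rw [← map_smul, Submodule.mkQ_apply, Submodule.Quotient.mk_eq_zero, Submodule.mem_comap, map_smul,
    Submodule.restrictScalars_mem, ← algebraMap_smul K] at hx
  rw [Submodule.mkQ_apply, Submodule.Quotient.mk_eq_zero]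
  exact (V.smul_mem_iff ((FaithfulSMul.algebraMap_eq_zero_iff R K).not.2 hr)).1 hx

/-- **Pontryagin's criterion**. -/
theorem free_of_fg_comap_finiteDimensional [IsPrincipalIdealRing R] {M W : Type*} [AddCommGroup M]
    [Module R M] [Countable M] [AddCommGroup W] [Module R W] [Module K W] [IsScalarTower R K W]
    {φ : M →ₗ[R] W} (hφ : Function.Injective φ)
    (hfg : ∀ V : Submodule K W, FiniteDimensional K V →
      ((V.restrictScalars R).comap φ).FG) : Module.Free R M := by
  obtain ⟨e, he⟩ := exists_surjective_nat M
  let V (n : ℕ) : Submodule K W := Submodule.span K ((φ ∘ e) '' Set.Iio n)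
  let N (n : ℕ) : Submodule R M := ((V n).restrictScalars R).comap φ
  have hVfin (n : ℕ) : FiniteDimensional K (V n) :=
    FiniteDimensional.span_of_finite K ((Set.finite_Iio n).image _)
  have hmem (n : ℕ) : e n ∈ N (n + 1) :=
    Submodule.subset_span (Set.mem_image_of_mem _ (Nat.lt_succ_self n))
  refine free_of_free_quotients_of_nat (N := N) ?mono ?bot ?top fun n => ?free
  case mono =>
    exact fun m n hmn => Submodule.comap_mono
      (Submodule.span_mono (Set.image_mono (Set.Iio_subset_Iio hmn)))
  case bot =>
    have : V 0 = ⊥ := by simp [V]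
    simpa [N, this] using LinearMap.ker_eq_bot.2 hφ
  case top =>
    refine eq_top_iff.2 fun m _ => ?_
    obtain ⟨n, rfl⟩ := he m
    exact Submodule.mem_iSup_of_mem (n + 1) (hmem n)
  case free =>
    have : Module.IsTorsionFree R (M ⧸ N n) := isTorsionFree_quotient_comap (V n) φ
    have : Module.Finite R ((N (n + 1)).map (N n).mkQ) :=
      Module.Finite.iff_fg.2 ((hfg _ (hVfin (n + 1))).map _)
    infer_instance

lemma exists_finset_forall_eq_zero {ι : Type*} (V : Submodule K (ι → K)) [FiniteDimensional K V] :
    ∃ F : Finset ι, ∀ v ∈ V, (∀ i ∈ F, v i = 0) → v = 0 := by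
  classical
  let vanishing (F : Finset ι) : Submodule K V :=
    ⨅ i ∈ F, LinearMap.ker (LinearMap.proj i ∘ₗ V.subtype)
  have hvan {F : Finset ι} {v : V} : v ∈ vanishing F ↔ ∀ i ∈ F, (v : ι → K) i = 0 := by
    simp [vanishing]
  obtain ⟨_, ⟨F, rfl⟩, hmin⟩ := IsArtinian.set_has_minimal (Set.range vanishing)
    (Set.range_nonempty _)
  refine ⟨F, fun v hv hF => funext fun i => ?_⟩
  have hle : vanishing (insert i F) ≤ vanishing F := fun w hw =>
    hvan.2 fun j hj => hvan.1 hw j (Finset.mem_insert_of_mem hj)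
  have heq : vanishing (insert i F) = vanishing F := hle.eq_of_not_lt (hmin _ ⟨_, rfl⟩)
  have hvF : (⟨v, hv⟩ : V) ∈ vanishing (insert i F) := heq ▸ hvan.2 hF
  exact hvan.1 hvF i (Finset.mem_insert_self i F)

/-- **Specker's theorem**. -/
theorem free_of_countable_of_injective_pi [IsPrincipalIdealRing R] {M ι : Type*} [AddCommGroup M]
    [Module R M] [Countable M] (φ : M →ₗ[R] (ι → R)) (hφ : Function.Injective φ) :
    Module.Free R M := by
  let ψ : M →ₗ[R] (ι → FractionRing R) := (Algebra.linearMap R (FractionRing R)).compLeft ι ∘ₗ φ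
  have hψ (m : M) (i : ι) : ψ m i = 0 ↔ φ m i = 0 :=
    FaithfulSMul.algebraMap_eq_zero_iff R (FractionRing R)
  have hψinj : Function.Injective ψ := (injective_iff_map_eq_zero ψ).2 fun m hm =>
    (injective_iff_map_eq_zero φ).1 hφ m (funext fun i => (hψ m i).1 (congrFun hm i))
  refine free_of_fg_comap_finiteDimensional (K := FractionRing R) hψinj fun V _ => ?_
  obtain ⟨F, hF⟩ := exists_finset_forall_eq_zero V
  let N := (V.restrictScalars R).comap ψ
  let coords : N →ₗ[R] (F → R) := LinearMap.funLeft R R Subtype.val ∘ₗ φ ∘ₗ N.subtype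
  have hcoords : Function.Injective coords := by
    refine (injective_iff_map_eq_zero coords).2 fun m hm => Subtype.ext (hψinj ?_)
    rw [ZeroMemClass.coe_zero, map_zero]
    exact hF _ m.2 fun i hi => (hψ m i).2 (congrFun hm ⟨i, hi⟩)
  exact Module.Finite.iff_fg.1 (Module.Finite.of_injective coords hcoords)

end Pontryagin

section Denominators

lemma den_dvd_iff {q : ℚ} {n : ℕ} : q.den ∣ n ↔ ∃ z : ℤ, n * q = z := by
  refine ⟨?_, ?_⟩
  · rintro ⟨c, rfl⟩
    refine ⟨c * q.num, ?_⟩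
    push_cast
    rw [← Rat.den_mul_eq_num]
    ring
  · rintro ⟨z, hz⟩
    rcases eq_or_ne n 0 with rfl | hn
    · exact dvd_zero _
    · have hq : q = (z : ℚ) / (n : ℤ) := by
        rw [Int.cast_natCast, eq_div_iff (Nat.cast_ne_zero.2 hn), mul_comm, hz]
      exact Int.natCast_dvd_natCast.1 (hq ▸ Rat.divInt_eq_div z n ▸ Rat.den_dvd z n)

lemma gcd_prod_dvd_prod_inter {S T : Finset ℕ} (hS : ∀ p ∈ S, p.Prime) (hT : ∀ p ∈ T, p.Prime) :
    Nat.gcd (∏ p ∈ S, p) (∏ p ∈ T, p) ∣ ∏ p ∈ S ∩ T, p := by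
  have hcop : Nat.Coprime (∏ p ∈ S \ T, p) (∏ p ∈ T, p) :=
    Nat.coprime_prod_left_iff.2 fun p hp => Nat.coprime_prod_right_iff.2 fun q hq =>
      have hp := Finset.mem_sdiff.1 hp
      (Nat.coprime_primes (hS p hp.1) (hT q hq)).2 fun hpq => hp.2 (hpq ▸ hq)
  rw [← Finset.prod_inter_mul_prod_sdiff S T fun p => p, hcop.gcd_mul_right_cancel]
  exact Nat.gcd_dvd_left _ _

lemma gcd_nsmul_mem {M : Type*} [AddCommGroup M] {L : Submodule ℤ M} {s t : ℕ} {m : M}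
    (hs : s • m ∈ L) (ht : t • m ∈ L) : Nat.gcd s t • m ∈ L := by
  rw [← natCast_zsmul, Nat.gcd_eq_gcd_ab, add_smul, mul_comm, mul_smul, mul_comm, mul_smul,
    natCast_zsmul, natCast_zsmul]
  exact L.add_mem (L.smul_mem _ hs) (L.smul_mem _ ht)

/-- The denominator of `q` divides a product of distinct primes from `A`. -/
def HasSquarefreeDenIn (A : Set ℕ) (q : ℚ) : Prop :=
  ∃ S : Finset ℕ, (∀ p ∈ S, p.Prime ∧ p ∈ A) ∧ q.den ∣ ∏ p ∈ S, p

lemma exists_forall_den_dvd_prod {ι : Type*} [Finite ι] {A : ι → Set ℕ} {v : ι → ℚ}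
    (hv : ∀ i, HasSquarefreeDenIn (A i) (v i)) :
    ∃ S : Finset ℕ, (∀ p ∈ S, p.Prime ∧ p ∈ ⋃ i, A i) ∧ ∀ i, (v i).den ∣ ∏ p ∈ S, p := by
  classical
  cases nonempty_fintype ι
  choose S hS hden using hv
  refine ⟨Finset.univ.biUnion S, fun p hp => ?_, fun i => (hden i).trans ?_⟩
  · obtain ⟨i, -, hpi⟩ := Finset.mem_biUnion.1 hp
    exact ⟨(hS i p hpi).1, Set.mem_iUnion_of_mem i (hS i p hpi).2⟩
  · exact Finset.prod_dvd_prod_of_subset _ _ _ (Finset.subset_biUnion_of_mem S (Finset.mem_univ i))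

lemma finite_of_smul_mem_fg {R M : Type*} [CommRing R] [IsDomain R] [IsNoetherianRing R]
    [AddCommGroup M] [Module R M] [Module.IsTorsionFree R M] {L : Submodule R M} (hL : L.FG) {r : R}
    (hr : r ≠ 0) (h : ∀ m, r • m ∈ L) : Module.Finite R M := by
  have := Module.Finite.iff_fg.2 hL
  exact Module.Finite.of_injective ((LinearMap.lsmul R M r).codRestrict L h) fun m m' hmm' =>
    smul_right_injective M hr (congrArg Subtype.val hmm')

variable {ι κ M : Type*} [AddCommGroup M]

/-- The elements with integral coordinates, for the coordinate system `f`. -/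
noncomputable def intLattice (f : M →ₗ[ℤ] (ι →₀ ℚ)) : Submodule ℤ M :=
  (LinearMap.range (Finsupp.mapRange.linearMap (Algebra.linearMap ℤ ℚ))).comap f

lemma fg_intLattice [Finite ι] {f : M →ₗ[ℤ] (ι →₀ ℚ)} (hf : Function.Injective f) :
    (intLattice f).FG :=
  Submodule.fg_of_fg_map_injective f hf
    ((Module.Finite.iff_fg.1 (Module.Finite.range _)).of_le (Submodule.map_comap_le _ _))

lemma smul_mem_intLattice {f : M →ₗ[ℤ] (ι →₀ ℚ)} {m : M} {n : ℕ} (h : ∀ i, (f m i).den ∣ n) :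
    n • m ∈ intLattice f := by
  refine ⟨(n • f m).mapRange Rat.num Rat.num_zero, Finsupp.ext fun i => ?_⟩
  obtain ⟨z, hz⟩ := den_dvd_iff.1 (h i)
  simp [hz]

variable {A : ι → Set ℕ} {B : κ → Set ℕ} {f : M →ₗ[ℤ] (ι →₀ ℚ)} {g : M →ₗ[ℤ] (κ →₀ ℚ)}

/-- Multiplying `m` by its two common denominators `s` and `t` gives elements of the sum `L` of the
two integral lattices, hence so does multiplying by `gcd s t`, which divides the product `D` of the
finitely many primes in `(⋃ i, A i) ∩ (⋃ j, B j)`. -/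
lemma finite_of_hasSquarefreeDenIn [Finite ι] [Finite κ] (hAB : ∀ i j, (A i ∩ B j).Finite)
    (hf : Function.Injective f) (hg : Function.Injective g)
    (hfA : ∀ m i, HasSquarefreeDenIn (A i) (f m i))
    (hgB : ∀ m j, HasSquarefreeDenIn (B j) (g m j)) : Module.Finite ℤ M := by
  classical
  have : Module.IsTorsionFree ℤ M := hf.moduleIsTorsionFree f (map_smul f)
  have hfin : ((⋃ i, A i) ∩ ⋃ j, B j).Finite := by
    rw [Set.iUnion_inter_iUnion]
    exact Set.finite_iUnion fun i => Set.finite_iUnion fun j => hAB i j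
  let L := intLattice f ⊔ intLattice g
  let D := ∏ p ∈ hfin.toFinset with p.Prime, p
  have hD : D ≠ 0 := Finset.prod_ne_zero_iff.2 fun p hp => (Finset.mem_filter.1 hp).2.ne_zero
  refine finite_of_smul_mem_fg (L := L) (r := D) ((fg_intLattice hf).sup (fg_intLattice hg))
    (Nat.cast_ne_zero.2 hD) fun m => ?_
  obtain ⟨S, hS, hfS⟩ := exists_forall_den_dvd_prod (hfA m)
  obtain ⟨T, hT, hgT⟩ := exists_forall_den_dvd_prod (hgB m)
  have hs : (∏ p ∈ S, p) • m ∈ L := Submodule.mem_sup_left (smul_mem_intLattice hfS)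
  have ht : (∏ p ∈ T, p) • m ∈ L := Submodule.mem_sup_right (smul_mem_intLattice hgT)
  have hgcd : Nat.gcd (∏ p ∈ S, p) (∏ p ∈ T, p) ∣ D := by
    refine (gcd_prod_dvd_prod_inter (fun p hp => (hS p hp).1) fun p hp => (hT p hp).1).trans
      (Finset.prod_dvd_prod_of_subset _ _ _ fun p hp => ?_)
    obtain ⟨hpS, hpT⟩ := Finset.mem_inter.1 hp
    exact Finset.mem_filter.2
      ⟨hfin.mem_toFinset.2 ⟨(hS p hpS).2, (hT p hpT).2⟩, (hS p hpS).1⟩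
  obtain ⟨c, hc⟩ := hgcd
  rw [hc, natCast_zsmul, mul_nsmul]
  exact L.nsmul_mem (gcd_nsmul_mem hs ht) c

lemma injective_lsubtypeDomain_comp_subtype {R E : Type*} [Ring R] [AddCommGroup E] [Module R E]
    [Module R M] {f : M →ₗ[R] (ι →₀ E)} (hf : Function.Injective f) {N : Submodule R M} {s : Set ι}
    (hs : ∀ m ∈ N, f m ∈ Finsupp.supported E R s) :
    Function.Injective (Finsupp.lsubtypeDomain s ∘ₗ f ∘ₗ N.subtype) := by
  refine (injective_iff_map_eq_zero _).2 fun m hm => Subtype.ext (hf (Finsupp.ext fun i => ?_))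
  rw [ZeroMemClass.coe_zero, map_zero, Finsupp.zero_apply]
  by_cases hi : i ∈ s
  · exact DFunLike.congr_fun hm ⟨i, hi⟩
  · exact (Finsupp.mem_supported' R _).1 (hs m m.2) i hi

lemma exists_finset_le_supported {K : Type*} [Field K] (V : Submodule K (ι →₀ K))
    [FiniteDimensional K V] : ∃ F : Finset ι, V ≤ Finsupp.supported K K F := by
  classical
  obtain ⟨S, rfl⟩ := Module.Finite.iff_fg.1 ‹FiniteDimensional K V›
  refine ⟨S.biUnion Finsupp.support, Submodule.span_le.2 fun v hv => ?_⟩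
  exact Finset.coe_subset.2 (Finset.subset_biUnion_of_mem Finsupp.support hv)

theorem free_of_countable_of_hasSquarefreeDenIn [Countable M] (hAB : ∀ i j, (A i ∩ B j).Finite)
    (hf : Function.Injective f) (hg : Function.Injective g)
    (hfA : ∀ m i, HasSquarefreeDenIn (A i) (f m i))
    (hgB : ∀ m j, HasSquarefreeDenIn (B j) (g m j)) : Module.Free ℤ M := by
  have hfg : Function.Injective (f.prod g) := fun m m' h => hf (congrArg Prod.fst h)
  refine free_of_fg_comap_finiteDimensional (K := ℚ) hfg fun V _ => ?_
  obtain ⟨F, hF⟩ := exists_finset_le_supported (V.map (LinearMap.fst ℚ (ι →₀ ℚ) (κ →₀ ℚ)))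
  obtain ⟨G, hG⟩ := exists_finset_le_supported (V.map (LinearMap.snd ℚ (ι →₀ ℚ) (κ →₀ ℚ)))
  let N := (V.restrictScalars ℤ).comap (f.prod g)
  have hfN := injective_lsubtypeDomain_comp_subtype (N := N) hf fun m hm => hF ⟨_, hm, rfl⟩
  have hgN := injective_lsubtypeDomain_comp_subtype (N := N) hg fun m hm => hG ⟨_, hm, rfl⟩
  exact Module.Finite.iff_fg.1 (finite_of_hasSquarefreeDenIn
    (fun i j => hAB i.1 j.1) hfN hgN (fun m i => hfA m i) fun m j => hgB m j)

end Denominators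

section Hull

lemma countable_preimage_of_countable_ker {G G' : Type*} [AddGroup G] [AddGroup G'] {f : G →+ G'}
    (hf : (f.ker : Set G).Countable) {s : Set G'} (hs : s.Countable) : (f ⁻¹' s).Countable := by
  rw [← Set.biUnion_preimage_singleton]
  refine hs.biUnion fun y _ => ?_
  rcases (f ⁻¹' {y}).eq_empty_or_nonempty with h | ⟨x, hx⟩
  · exact h ▸ Set.countable_empty
  · obtain rfl : f x = y := hx
    refine (hf.image (· + x)).mono fun x' hx' => ?_
    refine ⟨x' - x, f.mem_ker.2 ?_, sub_add_cancel x' x⟩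
    rw [map_sub, Set.mem_singleton_iff.1 hx', sub_self]

variable {R E H ι κ : Type*} [Ring R] [AddCommGroup E] [Module R E] [AddCommGroup H] [Module R H]
  {f : H →ₗ[R] (ι →₀ E)} {g : H →ₗ[R] (κ →₀ E)}

lemma countable_supported [Countable E] {s : Set ι} (hs : s.Countable) :
    (Finsupp.supported E R s : Set (ι →₀ E)).Countable := by
  have := hs.to_subtype
  exact Set.countable_coe_iff.1
    (Finsupp.supportedEquivFinsupp (M := E) (R := R) s).injective.countable

lemma countable_span [Countable R] {S : Set H} (hS : S.Countable) :
    (Submodule.span R S : Set H).Countable := by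
  have := hS.to_subtype
  have : Countable (Submodule.span R (Set.range ((↑) : S → H))) := inferInstance
  rwa [Subtype.range_coe] at this

/-- The union of the supports of the elements of `N`, for the coordinate system `f`. -/
def indexSupport (f : H →ₗ[R] (ι →₀ E)) (N : Submodule R H) : Set ι :=
  ⋃ n ∈ N, ((f n).support : Set ι)

lemma mem_indexSupport {N : Submodule R H} {i : ι} :
    i ∈ indexSupport f N ↔ ∃ n ∈ N, f n i ≠ 0 := by
  simp [indexSupport]

lemma indexSupport_mono : Monotone (indexSupport f) :=
  fun _ _ hNP => Set.biUnion_subset_biUnion_left hNP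

lemma indexSupport_iSup_of_directed {α : Type*} [Nonempty α] {N : α → Submodule R H}
    (hN : Directed (· ≤ ·) N) : indexSupport f (⨆ k, N k) = ⋃ k, indexSupport f (N k) := by
  ext i
  simp only [mem_indexSupport, Set.mem_iUnion, Submodule.mem_iSup_of_directed N hN]
  tauto

lemma countable_indexSupport {N : Submodule R H} (hN : (N : Set H).Countable) :
    (indexSupport f N).Countable :=
  hN.biUnion fun n _ => (f n).support.countable_toSet

/-- The largest submodule with the same `indexSupport` as `N`. The coordinate system `f` descends
injectively to `H ⧸ N` when `hull f N ≤ N`. -/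
noncomputable def hull (f : H →ₗ[R] (ι →₀ E)) (N : Submodule R H) : Submodule R H :=
  (Finsupp.supported E R (indexSupport f N)).comap f

lemma mem_hull {N : Submodule R H} {h : H} :
    h ∈ hull f N ↔ ∀ i, f h i ≠ 0 → i ∈ indexSupport f N := by
  simp only [hull, Submodule.mem_comap, Finsupp.mem_supported, Set.subset_def, Finset.mem_coe,
    Finsupp.mem_support_iff]

lemma le_hull (N : Submodule R H) : N ≤ hull f N :=
  fun n hn => mem_hull.2 fun _ hi => mem_indexSupport.2 ⟨n, hn, hi⟩

lemma countable_hull [Countable E] (hf : (LinearMap.ker f : Set H).Countable) {N : Submodule R H}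
    (hN : (N : Set H).Countable) : (hull f N : Set H).Countable :=
  countable_preimage_of_countable_ker (f := f.toAddMonoidHom) hf
    (countable_supported (R := R) (countable_indexSupport hN))

lemma hull_iSup_le {α : Type*} [Nonempty α] {N : α → Submodule R H} (hN : Directed (· ≤ ·) N) :
    hull f (⨆ k, N k) ≤ ⨆ k, hull f (N k) := by
  intro h hh
  rw [hull, indexSupport_iSup_of_directed hN] at hh
  have hdir : Directed (· ⊆ ·) fun k => indexSupport f (N k) :=
    hN.mono_comp (· ≤ ·) (g := indexSupport f) fun _ _ hNP => indexSupport_mono hNP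
  obtain ⟨k, hk⟩ := hdir.exists_mem_subset_of_finset_subset_biUnion hh
  exact Submodule.mem_iSup_of_mem k hk

lemma exists_countable_hull_le [Countable R] [Countable E]
    (hf : (LinearMap.ker f : Set H).Countable) (hg : (LinearMap.ker g : Set H).Countable)
    {S : Set H} (hS : S.Countable) :
    ∃ N : Submodule R H, S ⊆ N ∧ (N : Set H).Countable ∧ hull f N ≤ N ∧ hull g N ≤ N := by
  let N (k : ℕ) : Submodule R H :=
    (fun P => hull f P ⊔ hull g P)^[k] (Submodule.span R S)
  have hsucc (k : ℕ) : N (k + 1) = hull f (N k) ⊔ hull g (N k) :=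
    Function.iterate_succ_apply' _ _ _
  have hmono : Monotone N :=
    monotone_nat_of_le_succ fun k => hsucc k ▸ (le_hull _).trans le_sup_left
  have hcount (k : ℕ) : (N k : Set H).Countable := by
    induction k with
    | zero => exact countable_span hS
    | succ k ih =>
      rw [hsucc, Submodule.coe_sup]
      exact (countable_hull hf ih).image2 (countable_hull hg ih) (· + ·)
  refine ⟨⨆ k, N k, ?_, ?_, ?_, ?_⟩
  · exact Submodule.subset_span.trans (le_iSup N 0)
  · rw [Submodule.coe_iSup_of_directed N hmono.directed_le]
    exact Set.countable_iUnion hcount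
  · exact (hull_iSup_le hmono.directed_le).trans <| iSup_le fun k =>
      (le_sup_left.trans (hsucc k).ge).trans (le_iSup N (k + 1))
  · exact (hull_iSup_le hmono.directed_le).trans <| iSup_le fun k =>
      (le_sup_right.trans (hsucc k).ge).trans (le_iSup N (k + 1))

/-- The coordinate system induced by `f` on `H ⧸ N`: only the indices at which all elements of `N`
vanish survive. -/
noncomputable def quotientCoords (f : H →ₗ[R] (ι →₀ E)) (N : Submodule R H) :
    H ⧸ N →ₗ[R] (↥(indexSupport f N)ᶜ →₀ E) :=
  N.liftQ (Finsupp.lsubtypeDomain (indexSupport f N)ᶜ ∘ₗ f) fun n hn => Finsupp.ext fun i =>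
    not_not.1 fun hi => i.2 (mem_indexSupport.2 ⟨n, hn, hi⟩)

lemma quotientCoords_mkQ (N : Submodule R H) (h : H) (i : ↥(indexSupport f N)ᶜ) :
    quotientCoords f N (N.mkQ h) i = f h i := rfl

lemma quotientCoords_injective {N : Submodule R H} (hN : hull f N ≤ N) :
    Function.Injective (quotientCoords f N) := by
  refine (injective_iff_map_eq_zero _).2 fun x hx => ?_
  obtain ⟨h, rfl⟩ := N.mkQ_surjective x
  rw [N.mkQ_apply, Submodule.Quotient.mk_eq_zero]
  refine hN (mem_hull.2 fun i hi => ?_)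
  by_contra hiN
  rw [← quotientCoords_mkQ N h ⟨i, hiN⟩, hx] at hi
  exact hi Finsupp.zero_apply

lemma hull_comap_mkQ_le (N : Submodule R H) (P : Submodule R (H ⧸ N)) :
    hull f (P.comap N.mkQ) ≤ (hull (quotientCoords f N) P).comap N.mkQ := by
  intro h hh
  rw [Submodule.mem_comap, mem_hull]
  intro i hi
  rw [quotientCoords_mkQ] at hi
  obtain ⟨n, hn, hni⟩ := mem_indexSupport.1 (mem_hull.1 hh i hi)
  refine mem_indexSupport.2 ⟨N.mkQ n, hn, ?_⟩
  rwa [quotientCoords_mkQ]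

end Hull

section AlmostFree

variable {ι κ H : Type*} [AddCommGroup H] {f : H →ₗ[ℤ] (ι →₀ ℚ)} {g : H →ₗ[ℤ] (κ →₀ ℚ)}
  {A : ι → Set ℕ} {B : κ → Set ℕ}

lemma exists_free_quotient_of_hull_le (hAB : ∀ i j, (A i ∩ B j).Finite)
    (hfA : ∀ h i, HasSquarefreeDenIn (A i) (f h i)) (hgB : ∀ h j, HasSquarefreeDenIn (B j) (g h j))
    {N : Submodule ℤ H} (hfN : hull f N ≤ N) (hgN : hull g N ≤ N) (h : H) :
    ∃ P, hull f P ≤ P ∧ hull g P ≤ P ∧ N ≤ P ∧ h ∈ P ∧ Module.Free ℤ (P.map N.mkQ) := by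
  have hfinj := quotientCoords_injective hfN
  have hginj := quotientCoords_injective hgN
  obtain ⟨P, hhP, hPc, hfP, hgP⟩ := exists_countable_hull_le (f := quotientCoords f N)
    (g := quotientCoords g N) (by simp [LinearMap.ker_eq_bot.2 hfinj])
    (by simp [LinearMap.ker_eq_bot.2 hginj]) (Set.countable_singleton (N.mkQ h))
  refine ⟨P.comap N.mkQ, (hull_comap_mkQ_le N P).trans (Submodule.comap_mono hfP),
    (hull_comap_mkQ_le N P).trans (Submodule.comap_mono hgP), Submodule.le_comap_mkQ N P,
    hhP rfl, ?_⟩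
  rw [Submodule.map_comap_eq_of_surjective N.mkQ_surjective]
  have := hPc.to_subtype
  refine free_of_countable_of_hasSquarefreeDenIn (f := quotientCoords f N ∘ₗ P.subtype)
    (g := quotientCoords g N ∘ₗ P.subtype) (fun i j => hAB i.1 j.1)
    (hfinj.comp Subtype.val_injective) (hginj.comp Subtype.val_injective) (fun x i => ?_)
    fun x j => ?_
  · obtain ⟨m, hm⟩ := N.mkQ_surjective x
    rw [LinearMap.comp_apply, Submodule.subtype_apply, ← hm, quotientCoords_mkQ]
    exact hfA m i
  · obtain ⟨m, hm⟩ := N.mkQ_surjective x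
    rw [LinearMap.comp_apply, Submodule.subtype_apply, ← hm, quotientCoords_mkQ]
    exact hgB m j

theorem free_of_hasSquarefreeDenIn
    (hfree : ∀ N : Submodule ℤ H, (N : Set H).Countable → Module.Free ℤ N)
    (hAB : ∀ i j, (A i ∩ B j).Finite)
    (hf : (LinearMap.ker f : Set H).Countable) (hg : (LinearMap.ker g : Set H).Countable)
    (hfA : ∀ h i, HasSquarefreeDenIn (A i) (f h i))
    (hgB : ∀ h j, HasSquarefreeDenIn (B j) (g h j)) : Module.Free ℤ H := by
  refine free_of_free_quotients_of_chain_closed (𝒞 := {N | hull f N ≤ N ∧ hull g N ≤ N})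
    (fun c hc hne hchain => ?_) ?_ fun N hN h => ?_
  · have := hne.to_subtype
    have hdir : Directed (· ≤ ·) ((↑) : c → Submodule ℤ H) := hchain.directed
    rw [sSup_eq_iSup']
    exact ⟨(hull_iSup_le hdir).trans (iSup_mono fun N => (hc N.2).1),
      (hull_iSup_le hdir).trans (iSup_mono fun N => (hc N.2).2)⟩
  · obtain ⟨N, -, hNc, hN⟩ := exists_countable_hull_le hf hg Set.countable_empty
    exact ⟨N, hN, hfree N hNc⟩
  · obtain ⟨P, hfP, hgP, hP⟩ := exists_free_quotient_of_hull_le hAB hfA hgB hN.1 hN.2 h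
    exact ⟨P, ⟨hfP, hgP⟩, hP⟩

theorem free_of_hasSquarefreeDenIn_of_countable_infinite_inter
    (hfree : ∀ N : Submodule ℤ H, (N : Set H).Countable → Module.Free ℤ N)
    (hAB : {i | ∃ j, (A i ∩ B j).Infinite}.Countable)
    (hf : (LinearMap.ker f : Set H).Countable) (hg : (LinearMap.ker g : Set H).Countable)
    (hfA : ∀ h i, HasSquarefreeDenIn (A i) (f h i))
    (hgB : ∀ h j, HasSquarefreeDenIn (B j) (g h j)) : Module.Free ℤ H := by
  let s : Set ι := {i | ∃ j, (A i ∩ B j).Infinite}ᶜ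
  have hker : (LinearMap.ker (Finsupp.lsubtypeDomain s ∘ₗ f) : Set H).Countable := by
    refine (countable_preimage_of_countable_ker (f := f.toAddMonoidHom) hf
      (countable_supported (R := ℤ) hAB)).mono fun h hh => ?_
    refine (Finsupp.mem_supported' ℤ _).2 fun i hi => DFunLike.congr_fun hh ⟨i, hi⟩
  exact free_of_hasSquarefreeDenIn (f := Finsupp.lsubtypeDomain s ∘ₗ f) hfree
    (fun i j => not_not.1 fun hij => i.2 ⟨j, hij⟩) hker hg (fun h i => hfA h i) hgB

end AlmostFree

section Groups

open Filter

/-- The sets `b i` consist of primes, are infinite, and have pairwise finite intersections. -/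
structure IsAlmostDisjointPrimeFamily {ι : Type*} (b : ι → Set ℕ) : Prop where
  prime : ∀ i, ∀ p ∈ b i, p.Prime
  infinite : ∀ i, (b i).Infinite
  finite_inter : Pairwise fun i j => (b i ∩ b j).Finite

open Classical in
/-- The sequence supported on `b` whose value at `n ∈ b` is the product of the elements of `b` below
`n`, so that modulo finitely supported sequences it is divisible by every element of `b`. -/
noncomputable def primeVec (b : Set ℕ) (n : ℕ) : ℤ :=
  if n ∈ b then ∏ p ∈ Finset.range n with p ∈ b, (p : ℤ) else 0

/-- The class of a rational sequence modulo finitely supported sequences. -/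
def germ : (ℕ → ℚ) →ₗ[ℚ] Germ (cofinite : Filter ℕ) ℚ where
  __ := Germ.coeAddHom cofinite
  map_smul' _ _ := rfl

/-- The class of an integral sequence modulo finitely supported sequences. -/
def intGerm : (ℕ → ℤ) →ₗ[ℤ] Germ (cofinite : Filter ℕ) ℚ :=
  germ.restrictScalars ℤ ∘ₗ (Algebra.linearMap ℤ ℚ).compLeft ℕ

lemma intGerm_eq_iff {x y : ℕ → ℤ} : intGerm x = intGerm y ↔ ∀ᶠ n in cofinite, x n = y n := by
  refine Germ.coe_eq.trans (eventually_congr (.of_forall fun n => ?_))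
  exact Int.cast_inj

lemma countable_ker_intGerm : (LinearMap.ker intGerm : Set (ℕ → ℤ)).Countable := by
  refine (Set.countable_range ((⇑) : (ℕ →₀ ℤ) → ℕ → ℤ)).mono fun x hx => ?_
  have hx0 : ∀ᶠ n in cofinite, x n = 0 := intGerm_eq_iff.1 (hx.trans (map_zero _).symm)
  exact ⟨Finsupp.ofSupportFinite x hx0, rfl⟩

lemma primeVec_ne_zero {b : Set ℕ} (hb : ∀ p ∈ b, p.Prime) {n : ℕ} (hn : n ∈ b) :
    primeVec b n ≠ 0 := by
  classical
  rw [primeVec, if_pos hn, Finset.prod_ne_zero_iff]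
  exact fun p hp => Nat.cast_ne_zero.2 (hb p (Finset.mem_filter.1 hp).2).ne_zero

lemma dvd_primeVec {b : Set ℕ} {p n : ℕ} (hp : p ∈ b) (hpn : p < n) : (p : ℤ) ∣ primeVec b n := by
  classical
  rw [primeVec]
  split_ifs
  · exact Finset.dvd_prod_of_mem _ (Finset.mem_filter.2 ⟨Finset.mem_range.2 hpn, hp⟩)
  · exact dvd_zero _

lemma exists_nsmul_intGerm_eq {b : Set ℕ} {p : ℕ} (hp : p ∈ b) :
    ∃ y, intGerm (p • y) = intGerm (primeVec b) := by
  refine ⟨fun n => primeVec b n / p, intGerm_eq_iff.2 ?_⟩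
  rw [Nat.cofinite_eq_atTop]
  filter_upwards [eventually_gt_atTop p] with n hn
  rw [Pi.smul_apply, nsmul_eq_mul, Int.mul_ediv_cancel' (dvd_primeVec hp hn)]

variable {ι : Type*} {b : ι → Set ℕ}

lemma IsAlmostDisjointPrimeFamily.eventually_coeff_mul_eq (hb : IsAlmostDisjointPrimeFamily b)
    {q : ι →₀ ℚ} {x : ℕ → ℤ}
    (h : Finsupp.linearCombination ℚ (fun i => intGerm (primeVec (b i))) q = intGerm x) (i : ι) :
    ∀ᶠ n in cofinite, n ∈ b i → q i * primeVec (b i) n = x n := by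
  let v (j : ι) (n : ℕ) : ℚ := primeVec (b j) n
  have hsum : germ (Finsupp.linearCombination ℚ v q) = germ fun n => (x n : ℚ) := by
    rw [Finsupp.apply_linearCombination]
    exact h
  have hdisj : ∀ᶠ n in cofinite, ∀ j ∈ q.support, j ≠ i → n ∉ b i ∩ b j :=
    (eventually_all_finset _).2 fun j _ => eventually_imp_distrib_left.2 fun hji =>
      (hb.finite_inter hji.symm).eventually_cofinite_notMem
  filter_upwards [Germ.coe_eq.1 hsum, hdisj] with n hn hdisj hni
  rw [← hn, Finsupp.linearCombination_apply, Finsupp.sum, Finset.sum_apply,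
    Finset.sum_eq_single i]
  · rfl
  · intro j hj hji
    have hnj : n ∉ b j := fun hnj => hdisj j hj hji ⟨hni, hnj⟩
    simp [v, primeVec, hnj]
  · intro hi
    simp [Finsupp.notMem_support_iff.1 hi]

lemma IsAlmostDisjointPrimeFamily.linearIndependent (hb : IsAlmostDisjointPrimeFamily b) :
    LinearIndependent ℚ fun i => intGerm (primeVec (b i)) := by
  refine linearIndependent_iff.2 fun q hq => Finsupp.ext fun i => ?_
  have hcoeff := hb.eventually_coeff_mul_eq (hq.trans (map_zero intGerm).symm) i
  obtain ⟨n, hni, hn⟩ :=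
    ((frequently_cofinite_iff_infinite.2 (hb.infinite i)).and_eventually hcoeff).exists
  have hvec : (primeVec (b i) n : ℚ) ≠ 0 := Int.cast_ne_zero.2 (primeVec_ne_zero (hb.prime i) hni)
  simpa [hvec] using hn hni

lemma IsAlmostDisjointPrimeFamily.hasSquarefreeDenIn_coeff (hb : IsAlmostDisjointPrimeFamily b)
    {q : ι →₀ ℚ} {x : ℕ → ℤ}
    (h : Finsupp.linearCombination ℚ (fun i => intGerm (primeVec (b i))) q = intGerm x) (i : ι) :
    HasSquarefreeDenIn (b i) (q i) := by
  classical
  have hcoeff := hb.eventually_coeff_mul_eq h i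
  obtain ⟨n, hni : n ∈ b i, hn⟩ :=
    ((frequently_cofinite_iff_infinite.2 (hb.infinite i)).and_eventually hcoeff).exists
  refine ⟨{p ∈ Finset.range n | p ∈ b i}, fun p hp => ?_, den_dvd_iff.2 ⟨x n, ?_⟩⟩
  · have hpi := (Finset.mem_filter.1 hp).2
    exact ⟨hb.prime i p hpi, hpi⟩
  · rw [← hn hni, primeVec, if_pos hni, mul_comm]
    push_cast
    rfl

/-- The integral sequences that are, modulo finitely supported ones, rational linear combinations of
the `primeVec (b i)`. -/
def primeGroup (b : ι → Set ℕ) : AddSubgroup (ℕ → ℤ) :=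
  (((Submodule.span ℚ (Set.range fun i => intGerm (primeVec (b i)))).restrictScalars ℤ).comap
    intGerm).toAddSubgroup

lemma mem_primeGroup {x : ℕ → ℤ} :
    x ∈ primeGroup b ↔ intGerm x ∈ Submodule.span ℚ (Set.range fun i => intGerm (primeVec (b i))) :=
  Iff.rfl

lemma primeVec_mem_primeGroup (i : ι) : primeVec (b i) ∈ primeGroup b :=
  Submodule.subset_span ⟨i, rfl⟩

lemma mem_primeGroup_of_zsmul_mem {n : ℤ} (hn : n ≠ 0) {x : ℕ → ℤ} (h : n • x ∈ primeGroup b) :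
    x ∈ primeGroup b := by
  rw [mem_primeGroup, map_zsmul, ← Int.cast_smul_eq_zsmul ℚ] at h
  exact mem_primeGroup.2 ((Submodule.smul_mem_iff _ (Int.cast_ne_zero.2 hn)).1 h)

lemma primeGroup_pure (n : ℤ) (x g : ℕ → ℤ) (hg : g ∈ primeGroup b) (hx : n • x = g) :
    ∃ g' ∈ primeGroup b, n • g' = g := by
  subst hx
  rcases eq_or_ne n 0 with rfl | hn
  · exact ⟨0, zero_mem _, by rw [zero_smul, zero_smul]⟩
  · exact ⟨x, mem_primeGroup_of_zsmul_mem hn hg, rfl⟩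

lemma IsAlmostDisjointPrimeFamily.exists_coordinates (hb : IsAlmostDisjointPrimeFamily b) :
    ∃ f : primeGroup b →ₗ[ℤ] (ι →₀ ℚ), (LinearMap.ker f : Set (primeGroup b)).Countable ∧
      ∀ x i, HasSquarefreeDenIn (b i) (f x i) := by
  let toSpan : primeGroup b →ₗ[ℤ] Submodule.span ℚ (Set.range fun i => intGerm (primeVec (b i))) :=
    (intGerm.toAddMonoidHom.comp (primeGroup b).subtype).toIntLinearMap.codRestrict
      ((Submodule.span ℚ _).restrictScalars ℤ) fun x => mem_primeGroup.1 x.2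
  let f := hb.linearIndependent.repr.restrictScalars ℤ ∘ₗ toSpan
  have hf (x : primeGroup b) :
      Finsupp.linearCombination ℚ (fun i => intGerm (primeVec (b i))) (f x) = intGerm x :=
    hb.linearIndependent.linearCombination_repr (toSpan x)
  refine ⟨f, ?_, fun x => hb.hasSquarefreeDenIn_coeff (hf x)⟩
  refine (countable_ker_intGerm.preimage Subtype.val_injective).mono fun x hx => ?_
  rw [Set.mem_preimage, SetLike.mem_coe, LinearMap.mem_ker, ← hf, LinearMap.mem_ker.1 hx, map_zero]

end Groups

section Invariants

open Cardinal

universe u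

variable {ι κ : Type*} {b : ι → Set ℕ} {b' : κ → Set ℕ}

lemma IsAlmostDisjointPrimeFamily.injective_primeVec (hb : IsAlmostDisjointPrimeFamily b) :
    Function.Injective fun i => (⟨_, primeVec_mem_primeGroup i⟩ : primeGroup b) :=
  fun _ _ hij => hb.linearIndependent.injective (congrArg (fun x => intGerm x.1) hij)

lemma IsAlmostDisjointPrimeFamily.mk_primeGroup {ι : Type} {b : ι → Set ℕ} [Infinite ι]
    (hb : IsAlmostDisjointPrimeFamily b) : #(primeGroup b) = #ι := by
  refine le_antisymm ?_ ?_
  · obtain ⟨f, hf, -⟩ := hb.exists_coordinates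
    have hfiber (q : ι →₀ ℚ) : #(f ⁻¹' {q}) ≤ ℵ₀ :=
      (countable_preimage_of_countable_ker (f := f.toAddMonoidHom) hf
        (Set.countable_singleton q)).le_aleph0
    calc #(primeGroup b) ≤ #(ι →₀ ℚ) * ℵ₀ := mk_le_mk_mul_of_mk_preimage_le f hfiber
      _ = #ι := by simp
  · exact mk_le_of_injective hb.injective_primeVec

lemma countable_setOf_infinite_divisors_mod {M : Type*} [AddCommGroup M] [Module.Free ℤ M]
    {E : Set M} (hE : E.Countable) :
    {m | {n : ℕ | ∃ x, m - n • x ∈ E}.Infinite}.Countable := by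
  let c := Module.Free.chooseBasis ℤ M
  let J := ⋃ e ∈ E, ((c.repr e).support : Set (Module.Free.ChooseBasisIndex ℤ M))
  have hJ : J.Countable := hE.biUnion fun e _ => (c.repr e).support.countable_toSet
  refine ((countable_supported (R := ℤ) hJ).preimage c.repr.injective).mono fun m hm => ?_
  refine (Finsupp.mem_supported' ℤ _).2 fun k hk => by_contra fun hmk => ?_
  have hdvd : ∀ n ∈ {n : ℕ | ∃ x, m - n • x ∈ E}, n ∈ (c.repr m k).natAbs.divisors := by
    rintro n ⟨x, hx⟩
    have hk0 : c.repr (m - n • x) k = 0 :=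
      Finsupp.notMem_support_iff.1 fun hkx => hk (Set.mem_biUnion hx hkx)
    refine Nat.mem_divisors.2 ⟨Int.natCast_dvd.1 ⟨c.repr x k, ?_⟩, Int.natAbs_ne_zero.2 hmk⟩
    simpa [sub_eq_zero] using hk0
  exact hm ((Finset.finite_toSet _).subset hdvd)

lemma IsAlmostDisjointPrimeFamily.not_free_primeGroup [Uncountable ι]
    (hb : IsAlmostDisjointPrimeFamily b) : ¬ Module.Free ℤ (primeGroup b) := by
  intro _
  let v (i : ι) : primeGroup b := ⟨_, primeVec_mem_primeGroup i⟩
  have hE : ({x | intGerm x = 0} : Set (primeGroup b)).Countable :=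
    countable_ker_intGerm.preimage Subtype.val_injective
  have hdiv (i : ι) : b i ⊆ {n : ℕ | ∃ x, v i - n • x ∈ {x : primeGroup b | intGerm x = 0}} := by
    intro p hp
    obtain ⟨y, hy⟩ := exists_nsmul_intGerm_eq hp
    have hpy : (p : ℤ) • y ∈ primeGroup b := by
      rw [mem_primeGroup, natCast_zsmul, hy]
      exact primeVec_mem_primeGroup i
    have hyG := mem_primeGroup_of_zsmul_mem (Nat.cast_ne_zero.2 (hb.prime i p hp).ne_zero) hpy
    exact ⟨⟨y, hyG⟩, (map_sub intGerm _ _).trans (sub_eq_zero.2 hy.symm)⟩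
  have huniv : (Set.univ : Set ι).Countable :=
    ((countable_setOf_infinite_divisors_mod hE).preimage hb.injective_primeVec).mono fun i _ =>
      (hb.infinite i).mono (hdiv i)
  exact Set.not_countable_univ huniv

/-- Two abelian groups are almost disjoint if every group that embeds into both is free. -/
def IsAlmostDisjoint (A B : Type u) [AddCommGroup A] [AddCommGroup B] : Prop :=
  ∀ (H : Type u) [AddCommGroup H], (∃ φ : H →+ A, Function.Injective φ) →
    (∃ ψ : H →+ B, Function.Injective ψ) → Module.Free ℤ H

lemma IsAlmostDisjoint.free_inf {G : Type u} [AddCommGroup G] {A B : AddSubgroup G}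
    (h : IsAlmostDisjoint A B) : Module.Free ℤ ↥(A ⊓ B) :=
  h _ ⟨AddSubgroup.inclusion inf_le_left, AddSubgroup.inclusion_injective _⟩
    ⟨AddSubgroup.inclusion inf_le_right, AddSubgroup.inclusion_injective _⟩

lemma IsAlmostDisjoint.not_nonempty_addEquiv {A B : Type u} [AddCommGroup A] [AddCommGroup B]
    (h : IsAlmostDisjoint A B) (hA : ¬ Module.Free ℤ A) : ¬ Nonempty (A ≃+ B) :=
  fun ⟨e⟩ => hA (h A ⟨.id A, Function.injective_id⟩ ⟨e, e.injective⟩)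

theorem isAlmostDisjoint_primeGroup (hb : IsAlmostDisjointPrimeFamily b)
    (hb' : IsAlmostDisjointPrimeFamily b') (hbb' : {i | ∃ j, (b i ∩ b' j).Infinite}.Countable) :
    IsAlmostDisjoint (primeGroup b) (primeGroup b') := by
  rintro H _ ⟨φ, hφ⟩ ⟨ψ, hψ⟩
  obtain ⟨f, hf, hfb⟩ := hb.exists_coordinates
  obtain ⟨g, hg, hgb'⟩ := hb'.exists_coordinates
  refine free_of_hasSquarefreeDenIn_of_countable_infinite_inter
    (f := f ∘ₗ φ.toIntLinearMap) (g := g ∘ₗ ψ.toIntLinearMap) (fun N hN => ?_) hbb'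
    (hf.preimage hφ) (hg.preimage hψ) (fun h => hfb (φ h)) (fun h => hgb' (ψ h))
  have := hN.to_subtype
  exact free_of_countable_of_injective_pi
    (((primeGroup b).subtype.comp φ).toIntLinearMap ∘ₗ N.subtype)
    (Subtype.val_injective.comp (hφ.comp Subtype.val_injective))

end Invariants

section Families

open Cardinal

/-- The branch of the binary tree along `r`, as the set of primes that code the finite initial
segments of `r`. -/
noncomputable def primeBranch (r : ℕ → Bool) : Set ℕ :=
  Set.range fun n => Nat.nth Nat.Prime (Encodable.encode (PiNat.res r n))

lemma nth_prime_encode_injective :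
    Function.Injective fun l : List Bool => Nat.nth Nat.Prime (Encodable.encode l) :=
  (Nat.nth_injective Nat.infinite_setOfPred_prime).comp Encodable.encode_injective

lemma primeBranch_inter_finite {r s : ℕ → Bool} (hrs : r ≠ s) :
    (primeBranch r ∩ primeBranch s).Finite := by
  obtain ⟨i, hi⟩ := Function.ne_iff.1 hrs
  refine ((Set.finite_Iic i).image
    fun n => Nat.nth Nat.Prime (Encodable.encode (PiNat.res r n))).subset ?_
  rintro _ ⟨⟨n, rfl⟩, m, hm⟩
  have hres : PiNat.res s m = PiNat.res r n := nth_prime_encode_injective hm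
  obtain rfl : m = n := by simpa only [PiNat.res_length] using congrArg List.length hres
  exact ⟨m, le_of_not_gt fun him => hi (PiNat.res_eq_res.1 hres him).symm, rfl⟩

lemma isAlmostDisjointPrimeFamily_primeBranch : IsAlmostDisjointPrimeFamily primeBranch where
  prime := by
    rintro r _ ⟨n, rfl⟩
    exact Nat.prime_nth_prime _
  infinite r := Set.infinite_range_of_injective fun m n hmn => by
    simpa only [PiNat.res_length] using congrArg List.length (nth_prime_encode_injective hmn)
  finite_inter _ _ := primeBranch_inter_finite

lemma IsAlmostDisjointPrimeFamily.comp {ι κ : Type*} {b : ι → Set ℕ} {e : κ → ι}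
    (hb : IsAlmostDisjointPrimeFamily b) (he : Function.Injective e) :
    IsAlmostDisjointPrimeFamily (b ∘ e) where
  prime i := hb.prime (e i)
  infinite i := hb.infinite (e i)
  finite_inter _ _ hij := hb.finite_inter (he.ne hij)

/-- The initial segment of `η` below `δ`, which remembers `δ`. -/
def initialSegment {W : Type*} [Preorder W] (η : Set W) (δ : W) : Σ δ : W, Set (Set.Iio δ) :=
  ⟨δ, Subtype.val ⁻¹' η⟩

lemma initialSegment_injective {W : Type*} [Preorder W] (η : Set W) :
    Function.Injective (initialSegment η) :=
  fun _ _ h => congrArg Sigma.fst h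

lemma countable_setOf_initialSegment_eq {W : Type*} [LinearOrder W]
    (hW : ∀ δ : W, (Set.Iio δ).Countable) {η ν : Set W} (hην : η ≠ ν) :
    {δ | ∃ ε, initialSegment η δ = initialSegment ν ε}.Countable := by
  obtain ⟨δ₀, hδ₀⟩ : ∃ δ₀, ¬ (δ₀ ∈ η ↔ δ₀ ∈ ν) := not_forall.1 fun h => hην (Set.ext h)
  have hIic : (Set.Iic δ₀).Countable := Set.Iio_insert (a := δ₀) ▸ (hW δ₀).insert δ₀
  refine hIic.mono ?_
  rintro δ ⟨ε, h⟩
  obtain rfl : δ = ε := congrArg Sigma.fst h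
  refine le_of_not_gt fun hlt => hδ₀ ?_
  exact Set.ext_iff.1 (eq_of_heq (Sigma.mk.inj h).2) ⟨δ₀, hlt⟩

lemma exists_linearOrder_mk_eq_aleph_one :
    ∃ (W : Type) (_ : LinearOrder W), #W = ℵ₁ ∧ ∀ δ : W, (Set.Iio δ).Countable := by
  refine ⟨(ℵ₁ : Cardinal.{0}).ord.ToType, inferInstance, mk_ord_toType _, fun δ => ?_⟩
  have h := mk_Iio_lt δ (by rw [mk_ord_toType, Ordinal.type_toType])
  rw [mk_ord_toType] at h
  rwa [← le_aleph0_iff_set_countable, ← Order.lt_succ_iff, succ_aleph0]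

lemma mk_sigma_set_Iio_le_continuum {W : Type} [LinearOrder W] (hWcard : #W ≤ 𝔠)
    (hW : ∀ δ : W, (Set.Iio δ).Countable) : #(Σ δ : W, Set (Set.Iio δ)) ≤ 𝔠 := by
  have hpow (δ : W) : #(Set (Set.Iio δ)) ≤ 𝔠 := by
    rw [mk_set]
    exact power_le_power_left two_ne_zero (hW δ).le_aleph0
  calc #(Σ δ : W, Set (Set.Iio δ)) = sum fun δ : W => #(Set (Set.Iio δ)) := mk_sigma _
    _ ≤ sum fun _ : W => 𝔠 := sum_le_sum _ _ hpow
    _ = #W * 𝔠 := sum_const' _ _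
    _ ≤ 𝔠 := mul_le_of_le aleph0_le_continuum hWcard le_rfl

lemma exists_almostDisjointPrimeFamilies :
    ∃ (W : Type) (b : Set W → W → Set ℕ), #W = ℵ₁ ∧ (∀ η, IsAlmostDisjointPrimeFamily (b η)) ∧
      ∀ η ν, η ≠ ν → {δ | ∃ ε, (b η δ ∩ b ν ε).Infinite}.Countable := by
  obtain ⟨W, _, hWcard, hW⟩ := exists_linearOrder_mk_eq_aleph_one
  have hcode : #(Σ δ : W, Set (Set.Iio δ)) ≤ #(ℕ → Bool) := by
    simpa using mk_sigma_set_Iio_le_continuum (hWcard.trans_le aleph_one_le_continuum) hW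
  obtain ⟨code⟩ := hcode
  refine ⟨W, fun η => primeBranch ∘ code ∘ initialSegment η, hWcard, fun η => ?_,
    fun η ν hην => ?_⟩
  · exact isAlmostDisjointPrimeFamily_primeBranch.comp
      (code.injective.comp (initialSegment_injective η))
  · refine (countable_setOf_initialSegment_eq hW hην).mono ?_
    rintro δ ⟨ε, hδε⟩
    refine ⟨ε, code.injective (not_not.1 fun hne => hδε ?_)⟩
    exact isAlmostDisjointPrimeFamily_primeBranch.finite_inter hne

end Families

end BaerSpecker

/-- There exists a family `(G_α)_{α ∈ I}` of subgroups of the Baer–Specker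
group `ℤ^ω = ℕ → ℤ`, indexed by a set `I` of cardinality `2^{ℵ₁}`, such that each `G_α`
is pure in `ℤ^ω`, has cardinality `ℵ₁`, is not free, and any two distinct members are
almost disjoint (hence have free intersection and are non-isomorphic). -/
theorem stmt0 :
    ∃ (I : Type) (G : I → AddSubgroup (ℕ → ℤ)),
      Cardinal.mk I = 2 ^ Cardinal.aleph 1 ∧
      (∀ α, ∀ (n : ℤ) (x g : ℕ → ℤ), g ∈ G α → n • x = g → ∃ g' ∈ G α, n • g' = g) ∧
      (∀ α, Cardinal.mk (G α) = Cardinal.aleph 1) ∧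
      (∀ α, ¬ Module.Free ℤ (G α)) ∧
      (∀ α β, α ≠ β →
        (∀ (H : Type) [AddCommGroup H],
          (∃ φ : H →+ (ℕ → ℤ), Function.Injective φ ∧ ∀ h, φ h ∈ G α) →
          (∃ ψ : H →+ (ℕ → ℤ), Function.Injective ψ ∧ ∀ h, ψ h ∈ G β) →
          Module.Free ℤ H) ∧
        Module.Free ℤ (↥(G α ⊓ G β)) ∧
        ¬ Nonempty ((G α) ≃+ (G β))) := by
  obtain ⟨W, b, hW, hb, hinter⟩ := BaerSpecker.exists_almostDisjointPrimeFamilies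
  have : Uncountable W := Cardinal.aleph0_lt_mk_iff.1 (hW ▸ Cardinal.aleph0_lt_aleph_one)
  have hnot (η : Set W) := (hb η).not_free_primeGroup
  have hdisj {η ν : Set W} (hην : η ≠ ν) :=
    BaerSpecker.isAlmostDisjoint_primeGroup (hb η) (hb ν) (hinter η ν hην)
  refine ⟨Set W, fun η => BaerSpecker.primeGroup (b η), by rw [Cardinal.mk_set, hW],
    fun _ => BaerSpecker.primeGroup_pure, fun η => (hb η).mk_primeGroup.trans hW, hnot,
    fun η ν hην => ⟨?_, (hdisj hην).free_inf, (hdisj hην).not_nonempty_addEquiv (hnot η)⟩⟩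
  rintro H _ ⟨φ, hφ, hφη⟩ ⟨ψ, hψ, hψν⟩
  exact hdisj hην H ⟨φ.codRestrict _ hφη, (φ.injective_codRestrict _ _).2 hφ⟩
    ⟨ψ.codRestrict _ hψν, (ψ.injective_codRestrict _ _).2 hψ⟩
end

section
/- Let σ, μ, λ be cardinals and X, Y sets with |Y| = μ, |X| = λ, μ^{<σ} = μ, and μ < λ ≤ 2^μ. Then there exist functions h_α : X → Y for α < μ such that for every partial function f from X to Y of cardinality less than σ there is some α < μ with f ⊆ h_α. -/
universe u

/-!
Since `|X| ≤ 2 ^ μ`, identify the points of `X` with distinct subsets of `Y`. For infinite `σ`, any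
fewer than `σ` subsets of `Y` are separated by a set `A ⊆ Y` with `|A| < σ`: take a point of the
symmetric difference of each two of them. Hence a partial function on a domain of size less than `σ`
factors through `x ↦ x ∩ A`, and is extended by the total function that looks up `x ∩ A` in a table
of size less than `σ`. If `μ` is infinite, there are at most `μ` pairs of such a set `A` and such a
table, as `μ ^< σ ≤ μ`, and `σ` may be taken to be infinite because `μ ^< ℵ₀ = μ`. If `μ` is finite,
`μ ^ |D| ≤ μ` leaves no functions `D → Y` besides the constant ones.
-/

open Cardinal Function Set

theorem le_of_powerlt_le_self {a b : Cardinal.{u}} (ha : 2 ≤ a) (h : a ^< b ≤ a) : b ≤ a := by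
  by_contra! hab
  have hpow : a ^ a ≤ a := powerlt_le.1 h a hab
  exact ((cantor a).trans_le (power_le_power_right ha)).not_ge hpow

theorem powerlt_le_powerlt_right {a b c : Cardinal.{u}} (h : a ≤ b) : a ^< c ≤ b ^< c :=
  powerlt_le.2 fun _ hν => (power_le_power_right h).trans (le_powerlt b hν)

/-- The type `[α]^{<σ}` of subsets of `α` of cardinality less than `σ`. -/
abbrev SmallSet (σ : Cardinal.{u}) (α : Type u) : Type u := {s : Set α // #s < σ}

theorem mk_smallSet_le_mul_powerlt (σ : Cardinal.{u}) (α : Type u) :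
    #(SmallSet σ α) ≤ σ * #α ^< σ := by
  let ranges (i : σ.ord.ToType) : Set (Set α) := range fun f : i.toOrd.1.ToType → α => range f
  have hranges (i : σ.ord.ToType) : #(ranges i) ≤ #α ^< σ :=
    calc #(ranges i) ≤ #(i.toOrd.1.ToType → α) := mk_range_le
      _ = #α ^ i.toOrd.1.card := by simp
      _ ≤ #α ^< σ := le_powerlt _ (lt_ord.1 i.toOrd.2)
  have hcover : {s : Set α | #s < σ} ⊆ ⋃ i, ranges i := by
    intro s hs
    let i : σ.ord.ToType := Ordinal.ToType.mk ⟨(#s).ord, ord_lt_ord.2 hs⟩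
    have hi : #i.toOrd.1.ToType = #s := by simp [i, Ordinal.ToType.toOrd]
    obtain ⟨e⟩ := Cardinal.eq.1 hi
    exact mem_iUnion.2 ⟨i, Subtype.val ∘ e, by simp⟩
  calc #(SmallSet σ α) ≤ #(⋃ i, ranges i) := mk_le_mk_of_subset hcover
    _ ≤ #σ.ord.ToType * ⨆ i, #(ranges i) := mk_iUnion_le ranges
    _ ≤ σ * #α ^< σ := by
      rw [mk_ord_toType]
      exact mul_le_mul_right (ciSup_le' hranges) _

theorem mk_smallSet_le {σ μ : Cardinal.{u}} {α : Type u} (hμ : ℵ₀ ≤ μ) (hpow : μ ^< σ ≤ μ)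
    (hα : #α ≤ μ) : #(SmallSet σ α) ≤ μ := by
  have hσ : σ ≤ μ := le_of_powerlt_le_self (ofNat_lt_aleph0.le.trans hμ) hpow
  calc #(SmallSet σ α) ≤ σ * #α ^< σ := mk_smallSet_le_mul_powerlt σ α
    _ ≤ μ * μ := mul_le_mul' hσ ((powerlt_le_powerlt_right hα).trans hpow)
    _ = μ := mul_eq_self hμ

/-- The trace `S ∩ A` of a set `S` on a set `A` of cardinality less than `σ`, which again has
cardinality less than `σ`. Keeping this bound in the type is what allows tables indexed by traces to
be counted. -/
def SmallSet.trace {σ : Cardinal.{u}} {α : Type u} (A : SmallSet σ α) (S : Set α) : SmallSet σ α :=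
  ⟨S ∩ A, (mk_le_mk_of_subset inter_subset_right).trans_lt A.2⟩

theorem SmallSet.exists_injective_trace {σ : Cardinal.{u}} {ι α : Type u} (hσ : ℵ₀ ≤ σ)
    (hι : #ι < σ) {S : ι → Set α} (hS : Injective S) :
    ∃ A : SmallSet σ α, Injective fun i => A.trace (S i) := by
  have hdiff (p : {p : ι × ι // p.1 ≠ p.2}) : ∃ a, ¬(a ∈ S p.1.1 ↔ a ∈ S p.1.2) := by
    by_contra! hp
    exact p.2 (hS (Set.ext hp))
  choose a ha using hdiff
  have hcard : #(range a) < σ :=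
    calc #(range a) ≤ #{p : ι × ι // p.1 ≠ p.2} := mk_range_le
      _ ≤ #(ι × ι) := mk_subtype_le _
      _ = #ι * #ι := by rw [mk_prod, lift_id]
      _ < σ := mul_lt_of_lt hσ hι hι
  refine ⟨⟨range a, hcard⟩, fun i j hij => ?_⟩
  by_contra hne
  have htrace : S i ∩ range a = S j ∩ range a := congrArg Subtype.val hij
  refine ha ⟨(i, j), hne⟩ ?_
  simpa using Set.ext_iff.1 htrace (a ⟨(i, j), hne⟩)

/-- Looking up the key `k` in a table `G`, a set of pairs of a key and a value. If `k` has
several entries the result is one of their values, and if it has none the result is arbitrary. -/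
noncomputable def lookup {K Y : Type*} [Nonempty Y] (G : Set (K × Y)) (k : K) : Y :=
  Classical.epsilon fun y => (k, y) ∈ G

theorem lookup_range {ι K Y : Type*} [Nonempty Y] {k : ι → K} (hk : Injective k) (f : ι → Y)
    (i : ι) : lookup (range fun j => (k j, f j)) (k i) = f i := by
  obtain ⟨j, hj⟩ := Classical.epsilon_spec
    (p := fun y => (k i, y) ∈ range fun j => (k j, f j)) ⟨f i, i, rfl⟩
  obtain ⟨hkey, hval⟩ := Prod.mk.inj hj
  exact hval.symm.trans (congrArg f (hk hkey))

/-- The family `h` of functions `X → Y` extends every partial function from `X` to `Y` of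
cardinality less than `σ`, a partial function being a function on a subset `D` of `X`. -/
def ExtendsPartialFunctions (σ : Cardinal.{u}) {X : Type u} {ι Y : Type*} (h : ι → X → Y) : Prop :=
  ∀ (D : Set X) (f : D → Y), #D < σ → ∃ i, ∀ x : D, h i x = f x

namespace ExtendsPartialFunctions

variable {σ τ : Cardinal.{u}} {X : Type u} {ι κ Y : Type*} {h : ι → X → Y}

theorem anti (hh : ExtendsPartialFunctions τ h) (hστ : σ ≤ τ) : ExtendsPartialFunctions σ h :=
  fun D f hD => hh D f (hD.trans_le hστ)

theorem comp_surjective (hh : ExtendsPartialFunctions σ h) {g : κ → ι} (hg : Surjective g) :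
    ExtendsPartialFunctions σ (h ∘ g) := fun D f hD => by
  obtain ⟨i, hi⟩ := hh D f hD
  obtain ⟨k, rfl⟩ := hg i
  exact ⟨k, hi⟩

end ExtendsPartialFunctions

/-- The data coding a total function into `Y`: a set `A ⊆ Y` and a table whose entries are pairs of
a trace on `A` and a value in `Y`, both of cardinality less than `σ`. -/
abbrev TraceTable (σ : Cardinal.{u}) (Y : Type u) : Type u :=
  SmallSet σ Y × SmallSet σ (SmallSet σ Y × Y)

theorem mk_traceTable_le {σ : Cardinal.{u}} {Y : Type u} (hY : ℵ₀ ≤ #Y) (hpow : #Y ^< σ ≤ #Y) :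
    #(TraceTable σ Y) ≤ #Y := by
  have hsets : #(SmallSet σ Y) ≤ #Y := mk_smallSet_le hY hpow le_rfl
  have hentries : #(SmallSet σ Y × Y) ≤ #Y := by
    rw [mk_prod, lift_id, lift_id]
    exact mul_le_of_le hY hsets le_rfl
  rw [mk_prod, lift_id, lift_id]
  exact mul_le_of_le hY hsets (mk_smallSet_le hY hpow hentries)

theorem extendsPartialFunctions_lookup_trace {σ : Cardinal.{u}} {X Y : Type u} [Nonempty Y]
    (hσ : ℵ₀ ≤ σ) {φ : X → Set Y} (hφ : Injective φ) :
    ExtendsPartialFunctions σ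
      fun (c : TraceTable σ Y) (x : X) => lookup c.2.1 (c.1.trace (φ x)) := by
  intro D f hD
  obtain ⟨A, hA⟩ := SmallSet.exists_injective_trace hσ hD (hφ.comp Subtype.val_injective)
  exact ⟨(A, ⟨_, mk_range_le.trans_lt hD⟩), lookup_range hA f⟩

theorem exists_extendsPartialFunctions_of_infinite {σ : Cardinal.{u}} {X Y : Type u} [Infinite Y]
    (hσ : ℵ₀ ≤ σ) (hpow : #Y ^< σ ≤ #Y) (hX : #X ≤ 2 ^ #Y) :
    ∃ h : Y → X → Y, ExtendsPartialFunctions σ h := by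
  obtain ⟨φ⟩ : #X ≤ #(Set Y) := hX.trans_eq mk_set.symm
  obtain ⟨e⟩ : #(TraceTable σ Y) ≤ #Y := mk_traceTable_le (aleph0_le_mk Y) hpow
  have hempty {α : Type u} : #(∅ : Set α) < σ := by simpa using aleph0_pos.trans_le hσ
  have : Nonempty (TraceTable σ Y) := ⟨⟨∅, hempty⟩, ⟨∅, hempty⟩⟩
  exact ⟨_, (extendsPartialFunctions_lookup_trace hσ φ.injective).comp_surjective
    (invFun_surjective e.injective)⟩

theorem const_surjective_of_mk_le {D Y : Type u} [Finite Y] (h : #(D → Y) ≤ #Y) :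
    Surjective (const D : Y → D → Y) := by
  have : Finite (D → Y) := lt_aleph0_iff_finite.1 (h.trans_lt mk_lt_aleph0)
  rcases isEmpty_or_nonempty D with _ | _
  · have : Nonempty Y := mk_ne_zero_iff.1 fun hY => by simp [hY] at h
    exact surjective_to_subsingleton _
  · exact (const_injective.bijective_of_nat_card_le
      (toNat_le_toNat h mk_lt_aleph0)).surjective

theorem extendsPartialFunctions_const {σ : Cardinal.{u}} (X : Type u) {Y : Type u} [Finite Y]
    (hpow : #Y ^< σ ≤ #Y) : ExtendsPartialFunctions σ (const X : Y → X → Y) := by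
  intro D f hD
  have hcard : #(D → Y) ≤ #Y := by simpa using powerlt_le.1 hpow _ hD
  obtain ⟨y, rfl⟩ := const_surjective_of_mk_le hcard f
  exact ⟨y, fun _ => rfl⟩

theorem stmt1_general (σ : Cardinal.{u}) (X Y : Type u) (hpow : #Y ^< σ ≤ #Y) (hX : #X ≤ 2 ^ #Y) :
    ∃ h : Y → X → Y, ExtendsPartialFunctions σ h := by
  rcases finite_or_infinite Y with _ | _
  · exact ⟨_, extendsPartialFunctions_const X hpow⟩
  · have hpow' : #Y ^< max σ ℵ₀ ≤ #Y := by
      rw [powerlt_max, powerlt_aleph0 (aleph0_le_mk Y)]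
      exact max_le hpow le_rfl
    obtain ⟨h, hh⟩ :=
      exists_extendsPartialFunctions_of_infinite (le_max_right σ ℵ₀) hpow' hX
    exact ⟨h, hh.anti (le_max_left σ ℵ₀)⟩

/-- Engelking–Karłowicz: if `|Y| = μ`, `|X| = λ`, `μ^{<σ} = μ` and
`μ < λ ≤ 2^μ`, then there are `μ` many functions `h_α : X → Y` such that every partial
function from `X` to `Y` of size `< σ` is extended by some `h_α`. Partial functions are
modelled as functions on a subset `D ⊆ X`. -/
theorem stmt1 (σ μ lam : Cardinal.{u}) (X Y : Type u)
    (hY : Cardinal.mk Y = μ) (hX : Cardinal.mk X = lam)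
    (hpow : μ ^< σ = μ) (hlt : μ < lam) (hle : lam ≤ 2 ^ μ) :
    ∃ (ι : Type u) (h : ι → X → Y), Cardinal.mk ι = μ ∧
      ∀ (D : Set X) (f : D → Y), Cardinal.mk D < σ →
        ∃ α : ι, ∀ x : D, h α (x : X) = f x := by
  subst hY hX
  obtain ⟨h, hh⟩ := stmt1_general σ X Y hpow.le hle
  exact ⟨Y, h, rfl, hh⟩
end

section
/- For every subset S of X, the subgroup G_S is a pure subgroup of ℤ^ω: whenever r ∈ ℤ, x ∈ ℤ^ω, g ∈ G_S and r·x = g, there exists g' ∈ G_S with r·g' = g. -/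
/-!
Modulo finitely supported functions, `x_{η,j}` is an integer multiple of `x_{η,m}` whenever `j ≤ m`,
so `G_S` is the increasing union of the groups generated by `Z_ω` and the `x_{η,m}` with `m` fixed.
Given `r ≠ 0`, take `m > |r|`: every prime occurring in an `x_{η,m}` is then coprime to `r`, and
independence yields coordinates at which `x_{η,m}` is coprime to `r` while any finitely many other
`x_{ν,m}` vanish. Reading off `r • x = z + ∑ η, b η • x_{η,m}` there shows that `r` divides each
`b η`, so it divides the sum inside the group, and what remains of `x` is finitely supported.
-/

open scoped Classical

/-- `xv P f η j` is the element `x_{η,j}` of `ℤ^ω`: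
`x_{η,j}(i) = (∏ {p ∈ P_η : j ≤ p < i}) * f_η(i)` (empty product `= 1`). -/
noncomputable def xv {X : Type*} (P : X → Set ℕ) (f : X → ℕ → ℤ) (η : X) (j : ℕ) :
    ℕ → ℤ :=
  fun i => (∏ p ∈ (Finset.range i).filter (fun p => p ∈ P η ∧ j ≤ p), (p : ℤ)) * f η i

/-- `Z_ω`: the subgroup of finitely supported functions in `ℤ^ω`. -/
def Zomega : AddSubgroup (ℕ → ℤ) where
  carrier := {g | (Function.support g).Finite}
  zero_mem' := by simp
  add_mem' := fun ha hb => (ha.union hb).subset (Function.support_add _ _)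
  neg_mem' := fun ha => by simpa using ha

/-- `G_S`: the subgroup of `ℤ^ω` generated by `Z_ω ∪ {x_{η,j} : η ∈ S, j ∈ ℕ}`. -/
noncomputable def GS {X : Type*} (P : X → Set ℕ) (f : X → ℕ → ℤ) (S : Set X) :
    AddSubgroup (ℕ → ℤ) :=
  AddSubgroup.closure ((Zomega : Set (ℕ → ℤ)) ∪ {g | ∃ η ∈ S, ∃ j : ℕ, g = xv P f η j})

open Filter

section FinitelySupported

lemma mem_Zomega_iff_eventuallyEq {z : ℕ → ℤ} : z ∈ Zomega ↔ z =ᶠ[atTop] 0 := by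
  rw [← Nat.cofinite_eq_atTop]
  rfl

lemma mem_Zomega_of_zsmul_mem {r : ℤ} (hr : r ≠ 0) {z : ℕ → ℤ} (hz : r • z ∈ Zomega) :
    z ∈ Zomega := by
  change (Function.support z).Finite
  rwa [← Function.support_const_smul_of_ne_zero r z hr]

end FinitelySupported

section Separation

lemma dvd_of_dvd_sum_mul {ι R : Type*} [CommSemiring R] {s : Finset ι} {b c : ι → R} {r : R}
    {η : ι} (hη : η ∈ s) (hcop : IsCoprime r (c η)) (hzero : ∀ ν ∈ s, ν ≠ η → c ν = 0)
    (hdvd : r ∣ ∑ ν ∈ s, b ν * c ν) : r ∣ b η := by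
  rw [Finset.sum_eq_single_of_mem η hη fun ν hν hne => by rw [hzero ν hν hne, mul_zero]] at hdvd
  exact hcop.dvd_of_dvd_mul_right hdvd

variable {ι : Type*} {v : ι → ℕ → ℤ} {r : ℤ}

lemma dvd_coeff_of_zsmul_eq_add_sum
    (hv : ∀ (s : Finset ι) (η : ι), η ∉ s →
      ∃ᶠ i in atTop, IsCoprime r (v η i) ∧ ∀ ν ∈ s, v ν i = 0)
    {x z : ℕ → ℤ} (hz : z ∈ Zomega) {s : Finset ι} {b : ι → ℤ}
    (hx : r • x = z + ∑ ν ∈ s, b ν • v ν) {η : ι} (hη : η ∈ s) : r ∣ b η := by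
  obtain ⟨i, ⟨hcop, hzero⟩, hzi⟩ := ((hv (s.erase η) η (s.notMem_erase η)).and_eventually
    (mem_Zomega_iff_eventuallyEq.1 hz)).exists
  refine dvd_of_dvd_sum_mul hη hcop
    (fun ν hν hne => hzero ν (Finset.mem_erase.2 ⟨hne, hν⟩)) ⟨x i, ?_⟩
  simpa [hzi] using (congrFun hx i).symm

lemma mem_Zomega_sup_closure_of_zsmul_mem (hr : r ≠ 0)
    (hv : ∀ (s : Finset ι) (η : ι), η ∉ s →
      ∃ᶠ i in atTop, IsCoprime r (v η i) ∧ ∀ ν ∈ s, v ν i = 0)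
    {x : ℕ → ℤ} (hx : r • x ∈ Zomega ⊔ AddSubgroup.closure (Set.range v)) :
    x ∈ Zomega ⊔ AddSubgroup.closure (Set.range v) := by
  obtain ⟨z, hz, y, hy, hzy⟩ := AddSubgroup.mem_sup.1 hx
  obtain ⟨b, rfl⟩ := AddSubgroup.exists_finsupp_of_mem_closure_range v y hy
  have hdvd : ∀ η ∈ b.support, r ∣ b η := fun η =>
    dvd_coeff_of_zsmul_eq_add_sum hv hz hzy.symm
  set q : ℕ → ℤ := ∑ η ∈ b.support, (b η / r) • v η
  have hrq : r • q = b.sum fun η c => c • v η := by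
    rw [Finset.smul_sum]
    exact Finset.sum_congr rfl fun η hη => by rw [smul_smul, Int.mul_ediv_cancel' (hdvd η hη)]
  have hxq : x - q ∈ Zomega := mem_Zomega_of_zsmul_mem hr <| by
    rwa [smul_sub, hrq, ← hzy, add_sub_cancel_right]
  have hq : q ∈ AddSubgroup.closure (Set.range v) := sum_mem fun η _ =>
    zsmul_mem (AddSubgroup.subset_closure (Set.mem_range_self η)) _
  exact AddSubgroup.mem_sup.2 ⟨x - q, hxq, q, hq, sub_add_cancel x q⟩

end Separation

section ProdIco

/-- The product of the members of `Q` in the interval `[j, i)`. For `Q = P η` it is the factor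
by which `x_{η,j}(i)` differs from `f_η(i)`. -/
noncomputable def prodIco (Q : Set ℕ) (j i : ℕ) : ℤ :=
  ∏ p ∈ Finset.Ico j i with p ∈ Q, (p : ℤ)

variable {Q : Set ℕ}

lemma prodIco_mul_prodIco {j m i : ℕ} (hjm : j ≤ m) (hmi : m ≤ i) :
    prodIco Q j m * prodIco Q m i = prodIco Q j i := by
  simp only [prodIco, Finset.prod_filter]
  exact Finset.prod_Ico_consecutive _ hjm hmi

lemma isCoprime_prodIco (hQ : ∀ p ∈ Q, p.Prime) {r : ℤ} (hr : r ≠ 0) {m : ℕ}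
    (hm : r.natAbs < m) (i : ℕ) : IsCoprime r (prodIco Q m i) := by
  refine IsCoprime.prod_right fun p hp => ?_
  obtain ⟨hpm, hpQ⟩ := Finset.mem_filter.1 hp
  have hrp : r.natAbs < p := hm.trans_le (Finset.mem_Ico.1 hpm).1
  rw [Int.isCoprime_iff_gcd_eq_one]
  exact (Nat.coprime_of_lt_prime (Int.natAbs_ne_zero.2 hr) hrp (hQ p hpQ)).symm

end ProdIco

section Stage

variable {X : Type*} (P : X → Set ℕ) (f : X → ℕ → ℤ) (S : Set X)

lemma xv_apply (η : X) (j i : ℕ) : xv P f η j i = prodIco (P η) j i * f η i := by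
  rw [xv, prodIco]
  congr 2
  ext p
  simp only [Finset.mem_filter, Finset.mem_range, Finset.mem_Ico]
  tauto

lemma xv_sub_zsmul_xv_mem_Zomega (η : X) {j m : ℕ} (hjm : j ≤ m) :
    xv P f η j - prodIco (P η) j m • xv P f η m ∈ Zomega := by
  rw [mem_Zomega_iff_eventuallyEq]
  filter_upwards [eventually_ge_atTop m] with i hmi
  simp only [Pi.sub_apply, Pi.smul_apply, Pi.zero_apply, smul_eq_mul, xv_apply, ← mul_assoc,
    prodIco_mul_prodIco hjm hmi, sub_self]

/-- The subgroup of `ℤ^ω` generated by `Z_ω` and the `x_{η,m}` with `η ∈ S`, for a single `m`.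
These subgroups form an increasing sequence with union `G_S`. -/
noncomputable def GSStage (m : ℕ) : AddSubgroup (ℕ → ℤ) :=
  Zomega ⊔ AddSubgroup.closure (Set.range fun η : S => xv P f η m)

variable {S} in
lemma xv_mem_GSStage {η : X} (hη : η ∈ S) {j m : ℕ} (hjm : j ≤ m) :
    xv P f η j ∈ GSStage P f S m := by
  have hm : xv P f η m ∈ AddSubgroup.closure (Set.range fun η : S => xv P f η m) :=
    AddSubgroup.subset_closure ⟨⟨η, hη⟩, rfl⟩
  exact AddSubgroup.mem_sup.2
    ⟨_, xv_sub_zsmul_xv_mem_Zomega P f η hjm, _, zsmul_mem hm _, sub_add_cancel _ _⟩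

lemma GSStage_mono : Monotone (GSStage P f S) := by
  refine fun j m hjm => sup_le le_sup_left ((AddSubgroup.closure_le _).2 ?_)
  rintro _ ⟨η, rfl⟩
  exact xv_mem_GSStage P f η.2 hjm

lemma GS_eq_iSup_GSStage : GS P f S = ⨆ m, GSStage P f S m := by
  refine le_antisymm ((AddSubgroup.closure_le _).2 (Set.union_subset ?_ ?_)) (iSup_le fun m => ?_)
  · exact fun z hz => AddSubgroup.mem_iSup_of_mem 0 (AddSubgroup.mem_sup_left hz)
  · rintro _ ⟨η, hη, j, rfl⟩
    exact AddSubgroup.mem_iSup_of_mem j (xv_mem_GSStage P f hη le_rfl)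
  · refine sup_le (fun z hz => AddSubgroup.subset_closure (Or.inl hz))
      (AddSubgroup.closure_mono ?_)
    rintro _ ⟨η, rfl⟩
    exact Or.inr ⟨η, η.2, m, rfl⟩

variable {P f S}

lemma mem_GS_iff_exists_mem_GSStage {x : ℕ → ℤ} : x ∈ GS P f S ↔ ∃ m, x ∈ GSStage P f S m := by
  rw [GS_eq_iSup_GSStage, AddSubgroup.mem_iSup_of_directed (GSStage_mono P f S).directed_le]

lemma mem_GSStage_of_zsmul_mem (hprime : ∀ η, ∀ p ∈ P η, p.Prime)
    (hf : ∀ (s : Finset X) (η : X), η ∉ s → ∃ᶠ i in atTop, f η i = 1 ∧ ∀ ν ∈ s, f ν i = 0)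
    {r : ℤ} (hr : r ≠ 0) {m : ℕ} (hm : r.natAbs < m) {x : ℕ → ℤ}
    (hx : r • x ∈ GSStage P f S m) : x ∈ GSStage P f S m := by
  refine mem_Zomega_sup_closure_of_zsmul_mem hr (fun s η hη => ?_) hx
  have hη' : (η : X) ∉ s.map (Function.Embedding.subtype _) := by simpa using hη
  refine (hf _ _ hη').mono fun i ⟨hone, hzero⟩ => ⟨?_, fun ν hν => ?_⟩
  · rw [xv_apply, hone, mul_one]
    exact isCoprime_prodIco (hprime η) hr hm i
  · rw [xv_apply, hzero ν (Finset.mem_map_of_mem _ hν), mul_zero]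

lemma mem_GS_of_zsmul_mem (hprime : ∀ η, ∀ p ∈ P η, p.Prime)
    (hf : ∀ (s : Finset X) (η : X), η ∉ s → ∃ᶠ i in atTop, f η i = 1 ∧ ∀ ν ∈ s, f ν i = 0)
    {r : ℤ} (hr : r ≠ 0) {x : ℕ → ℤ} (hx : r • x ∈ GS P f S) : x ∈ GS P f S := by
  obtain ⟨j, hj⟩ := mem_GS_iff_exists_mem_GSStage.1 hx
  set m := max j (r.natAbs + 1)
  have hm : r • x ∈ GSStage P f S m := GSStage_mono P f S (le_max_left _ _) hj
  have hrm : r.natAbs < m := Nat.lt_of_succ_le (le_max_right _ _)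
  exact mem_GS_iff_exists_mem_GSStage.2 ⟨m, mem_GSStage_of_zsmul_mem hprime hf hr hrm hm⟩

end Stage

lemma frequently_eq_one_and_forall_eq_zero {ι : Type*} {f : ι → ℕ → ℤ}
    (hind : ∀ (k : ℕ) (ηs : Fin k → ι) (a : Fin k → ℤ), Function.Injective ηs →
      {i : ℕ | ∀ l, f (ηs l) i = a l}.Infinite)
    (s : Finset ι) (η : ι) (hη : η ∉ s) :
    ∃ᶠ i in atTop, f η i = 1 ∧ ∀ ν ∈ s, f ν i = 0 := by
  let e := (insert η s).equivFin
  have hpattern := hind _ (fun l => (e.symm l : ι)) (fun l => if (e.symm l : ι) = η then 1 else 0)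
    (Subtype.val_injective.comp e.symm.injective)
  refine (Nat.frequently_atTop_iff_infinite.2 hpattern).mono fun i hi => ?_
  have hval : ∀ ν ∈ insert η s, f ν i = if ν = η then 1 else 0 := fun ν hν => by
    simpa using hi (e ⟨ν, hν⟩)
  refine ⟨by simpa using hval η (Finset.mem_insert_self η s), fun ν hν => ?_⟩
  rw [hval ν (Finset.mem_insert_of_mem hν), if_neg (ne_of_mem_of_not_mem hν hη)]

theorem stmt4_general {X : Type*} (P : X → Set ℕ) (f : X → ℕ → ℤ)
    (hprime : ∀ η, ∀ p ∈ P η, p.Prime)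
    (hf : ∀ (s : Finset X) (η : X), η ∉ s → ∃ᶠ i in atTop, f η i = 1 ∧ ∀ ν ∈ s, f ν i = 0)
    (S : Set X) :
    ∀ (r : ℤ) (x g : ℕ → ℤ), g ∈ GS P f S → r • x = g → ∃ g' ∈ GS P f S, r • g' = g := by
  rintro r x _ hx rfl
  rcases eq_or_ne r 0 with rfl | hr
  · exact ⟨0, zero_mem _, by rw [smul_zero, zero_smul]⟩
  · exact ⟨x, mem_GS_of_zsmul_mem hprime hf hr hx, rfl⟩

/-- `G_S` is a pure subgroup of `ℤ^ω`: whenever `r ∈ ℤ`, `x ∈ ℤ^ω`,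
`g ∈ G_S` and `r • x = g`, there is `g' ∈ G_S` with `r • g' = g`. -/
theorem stmt4
    {X : Type*} (P : X → Set ℕ) (f : X → ℕ → ℤ)
    (hprime : ∀ η, ∀ p ∈ P η, p.Prime)
    (hinf : ∀ η, (P η).Infinite)
    (hdisj : ∀ η ν, η ≠ ν → (P η ∩ P ν).Finite)
    (hind : ∀ (k : ℕ) (ηs : Fin k → X) (a : Fin k → ℤ), Function.Injective ηs →
      {i : ℕ | ∀ l, f (ηs l) i = a l}.Infinite)
    (S : Set X) :
    ∀ (r : ℤ) (x g : ℕ → ℤ), g ∈ GS P f S → r • x = g → ∃ g' ∈ GS P f S, r • g' = g :=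
  stmt4_general P f hprime (frequently_eq_one_and_forall_eq_zero hind) S
end

section
/- For any finitely many distinct η_1, …, η_k ∈ X, any j ∈ ℕ, and any integers n_1, …, n_k, if the function n_1·x_{η_1,j} + ⋯ + n_k·x_{η_k,j} has finite support (i.e., lies in Z_ω), then n_1 = ⋯ = n_k = 0. -/
/-!
By independence there are infinitely many `i` at which `η_l` is the only index with
`f_{η_l}(i) ≠ 0`, so one of them lies outside the finite support of the combination. There the
combination vanishes and equals `n_l * x_{η_l,j}(i)`, whose second factor is `f_{η_l}(i)` times a
finite product of primes; hence `n_l = 0`.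
-/

open scoped Classical

open Filter Function

theorem eq_zero_of_sum_smul_eventuallyEq_zero {ι α R M : Type*} [Fintype ι] [Semiring R]
    [IsDomain R] [AddCommMonoid M] [Module R M] [Module.IsTorsionFree R M] {L : Filter α}
    {u : ι → α → M} {c : ι → R} {l : ι} (hu : ∃ᶠ i in L, support (u · i) = {l})
    (hsum : ∑ m, c m • u m =ᶠ[L] 0) : c l = 0 := by
  obtain ⟨i, hi, hzero⟩ := (hu.and_eventually hsum).exists
  have hl : u l i ≠ 0 := hi.ge rfl
  have hne (m : ι) (hm : m ≠ l) : u m i = 0 := not_not.mp fun h => hm (hi.le h)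
  have hterm : c l • u l i = 0 := calc
    c l • u l i = ∑ m, c m • u m i :=
      (Fintype.sum_eq_single (f := fun m => c m • u m i) l fun m hm => by
        rw [hne m hm, smul_zero]).symm
    _ = (∑ m, c m • u m) i := by simp only [Finset.sum_apply, Pi.smul_apply]
    _ = 0 := hzero
  exact (smul_eq_zero.mp hterm).resolve_right hl

theorem infinite_setOf_support_eq_singleton {ι α M : Type*} [Zero M] [Nontrivial M]
    {f : ι → α → M} (hf : ∀ a : ι → M, {i | ∀ m, f m i = a m}.Infinite) (l : ι) :
    {i | support (f · i) = {l}}.Infinite := by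
  obtain ⟨b, hb⟩ := exists_ne (0 : M)
  exact (hf (Pi.single l b)).mono fun i hi =>
    (congrArg support (funext hi)).trans (Pi.support_single_of_ne hb)

theorem mem_Zomega_iff_eventuallyEq_zero {g : ℕ → ℤ} : g ∈ Zomega ↔ g =ᶠ[cofinite] 0 :=
  Iff.rfl

theorem xv_apply_eq_zero_iff {X : Type*} {P : X → Set ℕ} {η : X} (hP : 0 ∉ P η)
    (f : X → ℕ → ℤ) (j i : ℕ) : xv P f η j i = 0 ↔ f η i = 0 := by
  have hprod : ∏ p ∈ (Finset.range i).filter (fun p => p ∈ P η ∧ j ≤ p), (p : ℤ) ≠ 0 :=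
    Finset.prod_ne_zero_iff.mpr fun p hp =>
      Nat.cast_ne_zero.mpr (ne_of_mem_of_not_mem (Finset.mem_filter.mp hp).2.1 hP)
  exact mul_eq_zero_iff_left hprod

theorem stmt5_general {ι : Type*} [Fintype ι] (P : ι → Set ℕ) (f : ι → ℕ → ℤ)
    (hP : ∀ l, 0 ∉ P l) (hf : ∀ l, {i : ℕ | support (f · i) = {l}}.Infinite)
    (j : ι → ℕ) (n : ι → ℤ) (hmem : (∑ l, n l • xv P f l (j l)) ∈ Zomega) :
    ∀ l, n l = 0 := by
  intro l
  have hsupport (i : ℕ) : support (fun m => xv P f m (j m) i) = support (f · i) :=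
    Set.ext fun m => (xv_apply_eq_zero_iff (hP m) f (j m) i).not
  have hfreq : ∃ᶠ i in cofinite, support (fun m => xv P f m (j m) i) = {l} := by
    simpa only [hsupport] using frequently_cofinite_iff_infinite.mpr (hf l)
  exact eq_zero_of_sum_smul_eventuallyEq_zero hfreq (mem_Zomega_iff_eventuallyEq_zero.mp hmem)

/-- for distinct `η_1, …, η_k ∈ X`, any `j ∈ ℕ` and integers `n_1, …, n_k`,
if `n_1 • x_{η_1,j} + ⋯ + n_k • x_{η_k,j}` has finite support (lies in `Z_ω`),
then all `n_l = 0`. -/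
theorem stmt5
    {X : Type*} (P : X → Set ℕ) (f : X → ℕ → ℤ)
    (hprime : ∀ η, ∀ p ∈ P η, p.Prime)
    (hinf : ∀ η, (P η).Infinite)
    (hdisj : ∀ η ν, η ≠ ν → (P η ∩ P ν).Finite)
    (hind : ∀ (k : ℕ) (ηs : Fin k → X) (a : Fin k → ℤ), Function.Injective ηs →
      {i : ℕ | ∀ l, f (ηs l) i = a l}.Infinite)
    (k : ℕ) (ηs : Fin k → X) (hη : Function.Injective ηs) (j : ℕ) (n : Fin k → ℤ)
    (hmem : (∑ l, n l • xv P f (ηs l) j) ∈ Zomega) :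
    ∀ l, n l = 0 := by
  exact stmt5_general (P ∘ ηs) (f ∘ ηs) (fun l h0 => Nat.not_prime_zero (hprime _ 0 h0))
    (infinite_setOf_support_eq_singleton fun a => hind k ηs a hη) (fun _ => j) n hmem
end

section
/- For every η ∈ X and all j ≤ j' in ℕ, the element x_{η,j} − (∏{p ∈ P_η : j ≤ p < j'})·x_{η,j'} lies in Z_ω. Consequently, for any S ⊆ X with η ∈ S and any m ∈ ℕ, the coset x_η + Z_ω in the quotient group G_S/Z_ω is divisible by ∏{p ∈ P_η : p < m}; in particular, x_η + Z_ω is divisible in G_S/Z_ω by every prime p ∈ P_η. -/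
/-!
For `j ≤ j' ≤ i` the elements of `P_η` in `[j, i)` are those in `[j, j')` together with those in
`[j', i)`, so `x_{η,j}` and `(∏ {p ∈ P_η : j ≤ p < j'}) • x_{η,j'}` agree from `j'` on. With `j = 0`
this makes `x_{η,m}` a quotient of `x_η` by `∏ {p ∈ P_η : p < m}` modulo `Z_ω`, and `p ∈ P_η`
divides that product as soon as `p < m`.
-/

open scoped Classical

theorem prod_filter_range_mul_prod_filter_range {M : Type*} [CommMonoid M] (u : ℕ → M) (A : Set ℕ)
    [DecidablePred (· ∈ A)] {j j' i : ℕ} (hj : j ≤ j') (hi : j' ≤ i) :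
    (∏ p ∈ Finset.range j' with p ∈ A ∧ j ≤ p, u p) *
        ∏ p ∈ Finset.range i with p ∈ A ∧ j' ≤ p, u p =
      ∏ p ∈ Finset.range i with p ∈ A ∧ j ≤ p, u p := by
  have filter_range (a b : ℕ) :
      {p ∈ Finset.range b | p ∈ A ∧ a ≤ p} = {p ∈ Finset.Ico a b | p ∈ A} := by
    ext p
    simp only [Finset.mem_filter, Finset.mem_range, Finset.mem_Ico]
    tauto
  simp only [filter_range, Finset.prod_filter, Finset.prod_Ico_consecutive _ hj hi]

theorem exists_mem_sub_zsmul_mem_of_dvd {A : Type*} [AddGroup A] {H K : AddSubgroup A} {x : A}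
    {m n : ℤ} (hmn : m ∣ n) (hn : ∃ g ∈ H, x - n • g ∈ K) : ∃ g ∈ H, x - m • g ∈ K := by
  obtain ⟨c, rfl⟩ := hmn
  obtain ⟨g, hg, hx⟩ := hn
  exact ⟨c • g, H.zsmul_mem hg c, by rwa [← mul_zsmul]⟩

theorem sub_mem_Zomega_iff_eventuallyEq {g h : ℕ → ℤ} :
    g - h ∈ Zomega ↔ g =ᶠ[Filter.atTop] h := by
  rw [Filter.eventuallyEq_iff_sub, ← Nat.cofinite_eq_atTop]
  exact Filter.eventually_cofinite.symm

section

variable {X : Type*} (P : X → Set ℕ) (f : X → ℕ → ℤ)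

theorem xv_mem_GS {S : Set X} {η : X} (hη : η ∈ S) (j : ℕ) : xv P f η j ∈ GS P f S :=
  AddSubgroup.subset_closure (Or.inr ⟨η, hη, j, rfl⟩)

theorem xv_apply_eq_prod_mul_xv_apply (η : X) {j j' i : ℕ} (hj : j ≤ j') (hi : j' ≤ i) :
    xv P f η j i =
      (∏ p ∈ Finset.range j' with p ∈ P η ∧ j ≤ p, (p : ℤ)) * xv P f η j' i := by
  simp only [xv, ← mul_assoc, prod_filter_range_mul_prod_filter_range _ (P η) hj hi]

theorem xv_sub_prod_smul_xv_mem_Zomega (η : X) {j j' : ℕ} (hj : j ≤ j') :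
    xv P f η j - (∏ p ∈ Finset.range j' with p ∈ P η ∧ j ≤ p, (p : ℤ)) • xv P f η j' ∈
      Zomega := by
  rw [sub_mem_Zomega_iff_eventuallyEq]
  filter_upwards [Filter.eventually_ge_atTop j'] with i hi
  exact xv_apply_eq_prod_mul_xv_apply P f η hj hi

theorem exists_mem_GS_xv_zero_sub_prod_smul_mem_Zomega {S : Set X} {η : X} (hη : η ∈ S) (m : ℕ) :
    ∃ g ∈ GS P f S, xv P f η 0 - (∏ p ∈ Finset.range m with p ∈ P η, (p : ℤ)) • g ∈ Zomega := by
  refine ⟨xv P f η m, xv_mem_GS P f hη m, ?_⟩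
  simpa only [zero_le, and_true] using xv_sub_prod_smul_xv_mem_Zomega P f η (Nat.zero_le m)

theorem exists_mem_GS_xv_zero_sub_smul_mem_Zomega {S : Set X} {η : X} (hη : η ∈ S) {p : ℕ}
    (hp : p ∈ P η) : ∃ g ∈ GS P f S, xv P f η 0 - (p : ℤ) • g ∈ Zomega := by
  have p_dvd_prod : (p : ℤ) ∣ ∏ q ∈ Finset.range (p + 1) with q ∈ P η, (q : ℤ) :=
    Finset.dvd_prod_of_mem _ (Finset.mem_filter.mpr ⟨Finset.self_mem_range_succ p, hp⟩)
  exact exists_mem_sub_zsmul_mem_of_dvd p_dvd_prod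
    (exists_mem_GS_xv_zero_sub_prod_smul_mem_Zomega P f hη (p + 1))

end

theorem stmt8_general
    {X : Type*} (P : X → Set ℕ) (f : X → ℕ → ℤ) (η : X) :
    (∀ j j' : ℕ, j ≤ j' →
      xv P f η j -
        (∏ p ∈ (Finset.range j').filter (fun p => p ∈ P η ∧ j ≤ p), (p : ℤ)) • xv P f η j'
        ∈ Zomega) ∧
    (∀ S : Set X, η ∈ S → ∀ m : ℕ,
      ∃ g ∈ GS P f S,
        xv P f η 0 - (∏ p ∈ (Finset.range m).filter (fun p => p ∈ P η), (p : ℤ)) • g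
          ∈ Zomega) ∧
    (∀ S : Set X, η ∈ S → ∀ p ∈ P η,
      ∃ g ∈ GS P f S, xv P f η 0 - (p : ℤ) • g ∈ Zomega) :=
  ⟨fun _ _ hj => xv_sub_prod_smul_xv_mem_Zomega P f η hj,
    fun _ hη m => exists_mem_GS_xv_zero_sub_prod_smul_mem_Zomega P f hη m,
    fun _ hη _ hp => exists_mem_GS_xv_zero_sub_smul_mem_Zomega P f hη hp⟩

/-- for `η ∈ X` and `j ≤ j'`, the element
`x_{η,j} - (∏ {p ∈ P_η : j ≤ p < j'}) • x_{η,j'}` lies in `Z_ω`.  Consequently, for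
`S ⊆ X` with `η ∈ S` and any `m`, the coset `x_η + Z_ω` in `G_S/Z_ω` is divisible by
`∏ {p ∈ P_η : p < m}` (expressed here as: there is `g ∈ G_S` with
`x_η - (∏ …) • g ∈ Z_ω`); in particular it is divisible by every prime `p ∈ P_η`. -/
theorem stmt8
    {X : Type*} (P : X → Set ℕ) (f : X → ℕ → ℤ)
    (hprime : ∀ η, ∀ p ∈ P η, p.Prime)
    (hinf : ∀ η, (P η).Infinite)
    (hdisj : ∀ η ν, η ≠ ν → (P η ∩ P ν).Finite)
    (hind : ∀ (k : ℕ) (ηs : Fin k → X) (a : Fin k → ℤ), Function.Injective ηs →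
      {i : ℕ | ∀ l, f (ηs l) i = a l}.Infinite)
    (η : X) :
    (∀ j j' : ℕ, j ≤ j' →
      xv P f η j -
        (∏ p ∈ (Finset.range j').filter (fun p => p ∈ P η ∧ j ≤ p), (p : ℤ)) • xv P f η j'
        ∈ Zomega) ∧
    (∀ S : Set X, η ∈ S → ∀ m : ℕ,
      ∃ g ∈ GS P f S,
        xv P f η 0 - (∏ p ∈ (Finset.range m).filter (fun p => p ∈ P η), (p : ℤ)) • g
          ∈ Zomega) ∧
    (∀ S : Set X, η ∈ S → ∀ p ∈ P η,
      ∃ g ∈ GS P f S, xv P f η 0 - (p : ℤ) • g ∈ Zomega) :=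
  stmt8_general P f η
end

section
/- Let η₁ and η₂ be distinct functions from ω₁ to {0,1}. Then the groups G_{η₁} and G_{η₂} are almost disjoint: every abelian group H that is isomorphic to a subgroup of G_{η₁} and to a subgroup of G_{η₂} is free. In particular, G_{η₁} ∩ G_{η₂} is free. -/
/-!
Modulo `Z_ω`, the element `x_{η,j}` is the fraction `1 / ∏ {p ∈ P_η : p < j}` of `x_{η,0}`, and by
the independence property the germs at infinity of the `x_{η,0}` are linearly independent over `ℚ`.
So `G_S / Z_ω` embeds in a direct sum, over `η ∈ S`, of groups of rational numbers whose
denominators are products of distinct primes in `P_η`. A group `H` embedded in both `G_{η₁}` and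
`G_{η₂}` thus carries two maps `v`, `w` with countable kernels into such direct sums, and the two
index sets have only countably many indices in common, since `η₁` and `η₂` have different
restrictions to all ordinals beyond their first difference.

A back-and-forth argument yields a countable subgroup `K` of `H` that consists of all elements with
`v`-support in a countable set containing the common indices and also of all elements with
`w`-support in another set. By Specker's theorem countable subgroups of `ℤ^ω` are free, so `K` is,
and it remains to see that `H / K` is free. Deleting coordinates embeds `H / K` in two direct sums
in which every prime set on one side is almost disjoint from every prime set on the other.

In such a doubly embedded group, the subgroups cut out by support conditions on both sides are
closed under unions of chains, and by back-and-forth each proper one has a strictly larger one above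
it with countable quotient. That quotient is again doubly embedded, so it suffices that
countable doubly embedded groups are free. By Pontryagin's criterion this reduces to finite index
sets. There only finitely many primes occur in denominators on both sides; if `e` is their product,
Bézout shows that `e` maps the group into the sum of its two subgroups of elements with integral
coordinates, which are finitely generated.
-/

open scoped Classical

/-- `ω₁`, the first uncountable ordinal. -/
noncomputable def omega1 : Ordinal.{0} := (Cardinal.aleph 1).ord

/-- `X`: the set of all functions from a countable ordinal `α < ω₁` into `{0,1}`. -/
def BinSeqLt : Type 1 := {s : Σ α : Ordinal.{0}, Set.Iio α → Bool // s.1 < omega1}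

/-- the restriction `η ↾ α ∈ X` of `η : ω₁ → {0,1}` to `α < ω₁`. -/
noncomputable def restrictSeq (η : Set.Iio omega1 → Bool) (α : Set.Iio omega1) :
    BinSeqLt :=
  ⟨⟨α.1, fun β => η ⟨β.1, Set.mem_Iio.mpr (lt_trans (Set.mem_Iio.mp β.2) (Set.mem_Iio.mp α.2))⟩⟩, α.2⟩

/-- `G_η`: the subgroup of `ℤ^ω` generated by `Z_ω ∪ {x_{η↾α,j} : α < ω₁, j ∈ ℕ}`. -/
noncomputable def Geta (P : BinSeqLt → Set ℕ) (f : BinSeqLt → ℕ → ℤ)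
    (η : Set.Iio omega1 → Bool) : AddSubgroup (ℕ → ℤ) :=
  AddSubgroup.closure ((Zomega : Set (ℕ → ℤ)) ∪
    {g | ∃ α : Set.Iio omega1, ∃ j : ℕ, g = xv P f (restrictSeq η α) j})

/-! ### Bases along filtrations -/

section Filtrations

variable {R M : Type*} [Ring R] [AddCommGroup M] [Module R M] {N N' : Submodule R M} {B : Set M}

/-- `B` is a basis of the submodule `N`. Representing it as a set of elements of the ambient module
lets bases of increasing submodules be compared by inclusion. -/
def IsBasisOf (N : Submodule R M) (B : Set M) : Prop :=
  LinearIndepOn R id B ∧ Submodule.span R B = N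

theorem isBasisOf_bot_empty : IsBasisOf (⊥ : Submodule R M) ∅ :=
  ⟨linearIndepOn_empty R id, Submodule.span_empty⟩

theorem IsBasisOf.subset (hB : IsBasisOf N B) : B ⊆ N :=
  hB.2 ▸ Submodule.subset_span

theorem IsBasisOf.free (hB : IsBasisOf (⊤ : Submodule R M) B) : Module.Free R M := by
  have hspan : ⊤ ≤ Submodule.span R (Set.range (fun x : B => (x : M))) := by
    rw [Subtype.range_coe, hB.2]
  exact Module.Free.of_basis (Module.Basis.mk hB.1 hspan)

theorem exists_isBasisOf (N : Submodule R M) [Module.Free R N] : ∃ B, IsBasisOf N B := by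
  let b := Module.Free.chooseBasis R N
  refine ⟨Set.range (N.subtype ∘ b),
    (b.linearIndependent.map' N.subtype N.ker_subtype).linearIndepOn_id, ?_⟩
  rw [Set.range_comp, Submodule.span_image, b.span_eq, Submodule.map_top, N.range_subtype]

theorem IsBasisOf.extend (hB : IsBasisOf N B) (hle : N ≤ N')
    (hfree : Module.Free R (N'.map N.mkQ)) : ∃ B', B ⊆ B' ∧ IsBasisOf N' B' := by
  obtain ⟨B₀, hB₀⟩ := exists_isBasisOf (N'.map N.mkQ)
  obtain ⟨T, -, hT⟩ : ∃ T ⊆ (N' : Set M), Set.BijOn N.mkQ T B₀ :=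
    Set.surjOn_iff_exists_bijOn_subset.1 hB₀.subset
  have hTindep : LinearIndepOn R N.mkQ T := by
    rw [linearIndepOn_iff_image hT.injOn, hT.image_eq]
    exact hB₀.1
  refine ⟨B ∪ T, Set.subset_union_left,
    LinearIndepOn.union_id_of_quotient hB.subset hB.1 hTindep, ?_⟩
  rw [Submodule.span_union, hB.2, ← Submodule.comap_map_mkQ, Submodule.map_span, hT.image_eq, hB₀.2,
    Submodule.comap_map_mkQ, sup_eq_right.2 hle]

theorem IsBasisOf.iUnion_of_directed {ι : Type*} {N : ι → Submodule R M} {B : ι → Set M}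
    (hdir : Directed (· ⊆ ·) B) (hB : ∀ i, IsBasisOf (N i) (B i)) :
    IsBasisOf (⨆ i, N i) (⋃ i, B i) :=
  ⟨linearIndepOn_iUnion_of_directed hdir fun i => (hB i).1, by
    simp_rw [Submodule.span_iUnion, (hB _).2]⟩

theorem free_of_quotient (N : Submodule R M) [Module.Free R N] [Module.Free R (M ⧸ N)] :
    Module.Free R M := by
  obtain ⟨B, hB⟩ := exists_isBasisOf N
  have hfree : Module.Free R ((⊤ : Submodule R M).map N.mkQ) := by
    rw [Submodule.map_top, Submodule.range_mkQ]
    exact Module.Free.of_equiv Submodule.topEquiv.symm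
  obtain ⟨B', -, hB'⟩ := hB.extend le_top hfree
  exact hB'.free

theorem free_of_monotone_nat {L : ℕ → Submodule R M} (hL : Monotone L) (hbot : L 0 = ⊥)
    (htop : ⨆ n, L n = ⊤) (hfree : ∀ n, Module.Free R ((L (n + 1)).map (L n).mkQ)) :
    Module.Free R M := by
  choose! next hsub hnext using fun n (B : Set M) (hB : IsBasisOf (L n) B) =>
    hB.extend (hL n.le_succ) (hfree n)
  let B : ℕ → Set M := Nat.rec ∅ next
  have hB : ∀ n, IsBasisOf (L n) (B n) := by
    intro n
    induction n with
    | zero => exact hbot ▸ isBasisOf_bot_empty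
    | succ n ih => exact hnext n _ ih
  have hBmono : Monotone B := monotone_nat_of_le_succ fun n => hsub n _ (hB n)
  have hunion := IsBasisOf.iUnion_of_directed hBmono.directed_le hB
  rw [htop] at hunion
  exact hunion.free

theorem free_of_devissage (F : Set (Submodule R M)) (hbot : ⊥ ∈ F)
    (hchain : ∀ c ⊆ F, IsChain (· ≤ ·) c → c.Nonempty → sSup c ∈ F)
    (hsucc : ∀ N ∈ F, N ≠ ⊤ → ∃ N' ∈ F, N < N' ∧ Module.Free R (N'.map N.mkQ)) :
    Module.Free R M := by
  let pairs : Set (Submodule R M × Set M) := {p | p.1 ∈ F ∧ IsBasisOf p.1 p.2}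
  have hupper : ∀ c ⊆ pairs, IsChain (· ≤ ·) c → ∀ p ∈ c, ∃ ub ∈ pairs, ∀ q ∈ c, q ≤ ub := by
    intro c hc hch p hp
    have hdir : Directed (· ⊆ ·) fun q : c => q.1.2 :=
      Directed.mono_comp (· ≤ ·) monotone_snd hch.directed
    refine ⟨(sSup (Prod.fst '' c), ⋃ q : c, q.1.2), ⟨?_, ?_⟩, ?_⟩
    · refine hchain _ ?_ ?_ ⟨p.1, p, hp, rfl⟩
      · rintro _ ⟨q, hq, rfl⟩; exact (hc hq).1
      · exact monotone_fst.isChain_image hch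
    · rw [sSup_image']
      exact IsBasisOf.iUnion_of_directed hdir fun q => (hc q.2).2
    · intro q hq
      exact ⟨le_sSup ⟨q, hq, rfl⟩, Set.subset_iUnion (fun q : c => q.1.2) ⟨q, hq⟩⟩
  obtain ⟨⟨N, B⟩, -, hmax⟩ :=
    zorn_le_nonempty₀ pairs hupper (⊥, ∅) ⟨hbot, isBasisOf_bot_empty⟩
  obtain ⟨hN, hB⟩ := hmax.prop
  suffices N = ⊤ by subst this; exact hB.free
  by_contra hne
  obtain ⟨N', hN', hlt, hfree⟩ := hsucc N hN hne
  obtain ⟨B', hBB', hB'⟩ := hB.extend hlt.le hfree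
  exact hlt.not_ge (hmax.le_of_ge (y := (N', B')) ⟨hN', hB'⟩ ⟨hlt.le, hBB'⟩).1

end Filtrations

/-! ### Countable modules -/

section PureClosure

variable {R M : Type*} [CommRing R] [IsDomain R] [AddCommGroup M] [Module R M]
  {N N' : Submodule R M}

/-- The purification of `N`: the smallest submodule containing `N` with torsion-free quotient. -/
def pureClosure (N : Submodule R M) : Submodule R M :=
  (Submodule.torsion R (M ⧸ N)).comap N.mkQ

theorem mem_pureClosure {x : M} : x ∈ pureClosure N ↔ ∃ r : R, r ≠ 0 ∧ r • x ∈ N := by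
  simp only [pureClosure, Submodule.mem_comap, Submodule.mem_torsion_iff, Subtype.exists,
    mem_nonZeroDivisors_iff_ne_zero, Submonoid.mk_smul, Submodule.mkQ_apply, exists_prop,
    ← Submodule.Quotient.mk_smul, Submodule.Quotient.mk_eq_zero]

theorem le_pureClosure (N : Submodule R M) : N ≤ pureClosure N :=
  fun x hx => mem_pureClosure.2 ⟨1, one_ne_zero, by rwa [one_smul]⟩

theorem pureClosure_mono : Monotone (pureClosure : Submodule R M → Submodule R M) := by
  intro N N' h x hx
  obtain ⟨r, hr, hrx⟩ := mem_pureClosure.1 hx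
  exact mem_pureClosure.2 ⟨r, hr, h hrx⟩

instance isTorsionFree_quotient_pureClosure (N : Submodule R M) :
    Module.IsTorsionFree R (M ⧸ pureClosure N) := by
  refine Module.IsTorsionFree.of_smul_eq_zero fun r y hry => or_iff_not_imp_left.2 fun hr => ?_
  obtain ⟨x, rfl⟩ := (pureClosure N).mkQ_surjective y
  rw [← map_smul, Submodule.mkQ_apply, Submodule.Quotient.mk_eq_zero, mem_pureClosure] at hry
  obtain ⟨s, hs, hsrx⟩ := hry
  rw [Submodule.mkQ_apply, Submodule.Quotient.mk_eq_zero, mem_pureClosure]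
  exact ⟨s * r, mul_ne_zero hs hr, by rwa [mul_smul]⟩

theorem pureClosure_bot [Module.IsTorsionFree R M] : pureClosure (⊥ : Submodule R M) = ⊥ := by
  refine eq_bot_iff.2 fun x hx => ?_
  obtain ⟨r, hr, hrx⟩ := mem_pureClosure.1 hx
  exact (smul_eq_zero_iff_right hr).1 hrx

theorem rank_pureClosure (N : Submodule R M) :
    Module.rank R (pureClosure N) = Module.rank R N := by
  have hquot : Module.rank R (pureClosure N ⧸ N.submoduleOf (pureClosure N)) = 0 := by
    refine rank_eq_zero_iff.2 fun y => ?_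
    obtain ⟨⟨x, hx⟩, rfl⟩ := Submodule.mkQ_surjective _ y
    obtain ⟨r, hr, hrx⟩ := mem_pureClosure.1 hx
    exact ⟨r, hr, (Submodule.Quotient.mk_eq_zero _).2 hrx⟩
  rw [← rank_quotient_add_rank_of_isDomain (N.submoduleOf (pureClosure N)), hquot, zero_add,
    (Submodule.submoduleOfEquivOfLe (le_pureClosure N)).rank_eq]

end PureClosure

section Countable

variable {R M : Type*} [CommRing R] [IsDomain R] [AddCommGroup M] [Module R M]

theorem free_of_countable_of_fg_pureClosure [IsPrincipalIdealRing R] [Countable M]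
    [Module.IsTorsionFree R M] (hfg : ∀ N : Submodule R M, N.FG → (pureClosure N).FG) :
    Module.Free R M := by
  obtain ⟨e, he⟩ := exists_surjective_nat M
  let L : ℕ → Submodule R M := fun n => pureClosure (Submodule.span R (e '' Set.Iio n))
  have hL : Monotone L := fun m n hmn =>
    pureClosure_mono (Submodule.span_mono (Set.image_mono (Set.Iio_subset_Iio hmn)))
  refine free_of_monotone_nat hL ?_ ?_ fun n => ?_
  · simp only [L, Set.Iio_zero_eq_empty, Set.image_empty, Submodule.span_empty, pureClosure_bot]
  · refine eq_top_iff.2 fun x _ => ?_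
    obtain ⟨n, rfl⟩ := he x
    exact Submodule.mem_iSup_of_mem (n + 1)
      (le_pureClosure _ (Submodule.subset_span ⟨n, n.lt_succ_self, rfl⟩))
  · have hfin : (L (n + 1)).FG :=
      hfg _ (Submodule.fg_span (((Set.finite_Iio (n + 1)).image e)))
    have : Module.Finite R ((L (n + 1)).map (L n).mkQ) := Module.Finite.iff_fg.2 (hfin.map _)
    have : Module.IsTorsionFree R (M ⧸ L n) := isTorsionFree_quotient_pureClosure _
    infer_instance

theorem rank_ker_lt {ψ : M →ₗ[R] R} (hψ : ψ ≠ 0) {n : ℕ} (hrank : Module.rank R M = n) :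
    ∃ m < n, Module.rank R ψ.ker = m := by
  have hadd := rank_quotient_add_rank_of_isDomain ψ.ker
  rw [hrank] at hadd
  obtain ⟨k, hk⟩ := Cardinal.lt_aleph0.1
    ((self_le_add_right _ _).trans_lt (hadd.trans_lt (Cardinal.natCast_lt_aleph0)))
  obtain ⟨m, hm⟩ := Cardinal.lt_aleph0.1
    ((self_le_add_left _ _).trans_lt (hadd.trans_lt (Cardinal.natCast_lt_aleph0)))
  have hk0 : k ≠ 0 := by
    rintro rfl
    refine hψ (LinearMap.ext fun x => ?_)
    obtain ⟨r, hr, hrx⟩ := rank_eq_zero_iff.1 (hk.trans Nat.cast_zero) (ψ.ker.mkQ x)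
    rw [← map_smul, Submodule.mkQ_apply, Submodule.Quotient.mk_eq_zero, LinearMap.mem_ker,
      map_smul] at hrx
    exact (smul_eq_zero_iff_right hr).1 hrx
  rw [hk, hm] at hadd
  norm_cast at hadd
  exact ⟨m, by omega, hm⟩

theorem finite_of_injective_of_rank_lt_aleph0 [IsNoetherianRing R] {ι : Type*}
    (φ : M →ₗ[R] (ι → R)) (hφ : Function.Injective φ) (hrank : Module.rank R M < Cardinal.aleph0) :
    Module.Finite R M := by
  obtain ⟨n, hn⟩ := Cardinal.lt_aleph0.1 hrank
  clear hrank
  induction n using Nat.strong_induction_on generalizing M with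
  | h n ih =>
    cases subsingleton_or_nontrivial M with
    | inl _ => infer_instance
    | inr _ =>
      obtain ⟨i, hi⟩ : ∃ i, LinearMap.proj i ∘ₗ φ ≠ 0 := by
        by_contra! hzero
        obtain ⟨x, hx⟩ := exists_ne (0 : M)
        exact hx (hφ (funext fun i => by simpa using LinearMap.congr_fun (hzero i) x))
      set ψ := LinearMap.proj i ∘ₗ φ
      obtain ⟨m, hmn, hm⟩ := rank_ker_lt hi hn
      have : Module.Finite R ψ.ker :=
        ih m hmn (φ ∘ₗ ψ.ker.subtype) (hφ.comp Subtype.val_injective) hm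
      have : Module.Finite R (M ⧸ ψ.ker) := Module.Finite.equiv ψ.quotKerEquivRange.symm
      exact Module.Finite.of_submodule_quotient ψ.ker

theorem free_of_countable_of_injective [IsPrincipalIdealRing R] [Countable M] {ι : Type*}
    (φ : M →ₗ[R] (ι → R)) (hφ : Function.Injective φ) : Module.Free R M := by
  have : Module.IsTorsionFree R M := hφ.moduleIsTorsionFree φ (map_smul φ)
  refine free_of_countable_of_fg_pureClosure fun N hN => Module.Finite.iff_fg.1 ?_
  have : Module.Finite R N := Module.Finite.iff_fg.2 hN
  have hrank : Module.rank R (pureClosure N) < Cardinal.aleph0 :=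
    rank_pureClosure N ▸ Module.rank_lt_aleph0 R N
  exact finite_of_injective_of_rank_lt_aleph0 (φ ∘ₗ (pureClosure N).subtype)
    (hφ.comp Subtype.val_injective) hrank

end Countable

/-! ### Squarefree denominators -/

section SqfreeHull

variable {M : Type*} [AddCommGroup M] {A A' B : Set ℕ} {L L' : Submodule ℤ M}

theorem prod_smul_mem_of_subset {s t : Finset ℕ} (hst : s ⊆ t) {x : M}
    (hx : (∏ p ∈ s, (p : ℤ)) • x ∈ L) : (∏ p ∈ t, (p : ℤ)) • x ∈ L := by
  rw [← Finset.prod_sdiff hst, mul_smul]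
  exact L.smul_mem _ hx

/-- The elements of `M` that a product of distinct elements of `A` multiplies into `L`. For
`L = ℤ` in `ℚ` these are the fractions with such a product as denominator. -/
def sqfreeHull (A : Set ℕ) (L : Submodule ℤ M) : Submodule ℤ M where
  carrier := {x | ∃ s : Finset ℕ, ↑s ⊆ A ∧ (∏ p ∈ s, (p : ℤ)) • x ∈ L}
  zero_mem' := ⟨∅, by simp⟩
  add_mem' := by
    rintro x y ⟨s, hs, hx⟩ ⟨t, ht, hy⟩
    refine ⟨s ∪ t, by simp [hs, ht], ?_⟩
    rw [smul_add]
    exact L.add_mem (prod_smul_mem_of_subset Finset.subset_union_left hx)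
      (prod_smul_mem_of_subset Finset.subset_union_right hy)
  smul_mem' := by
    rintro c x ⟨s, hs, hx⟩
    exact ⟨s, hs, by rw [smul_comm]; exact L.smul_mem c hx⟩

theorem mem_sqfreeHull {x : M} :
    x ∈ sqfreeHull A L ↔ ∃ s : Finset ℕ, ↑s ⊆ A ∧ (∏ p ∈ s, (p : ℤ)) • x ∈ L := Iff.rfl

theorem sqfreeHull_mono_left (h : A ⊆ A') : sqfreeHull A L ≤ sqfreeHull A' L :=
  fun _ ⟨s, hs, hx⟩ => ⟨s, hs.trans h, hx⟩

theorem sqfreeHull_mono_right (h : L ≤ L') : sqfreeHull A L ≤ sqfreeHull A L' :=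
  fun _ ⟨s, hs, hx⟩ => ⟨s, hs, h hx⟩

theorem comap_sqfreeHull {M' : Type*} [AddCommGroup M'] (g : M' →ₗ[ℤ] M) :
    (sqfreeHull A L).comap g = sqfreeHull A (L.comap g) := by
  ext x
  simp only [Submodule.mem_comap, mem_sqfreeHull, map_smul]

theorem prod_inter_smul_mem_sup {s t : Finset ℕ} (hs : ∀ p ∈ s, p.Prime) (ht : ∀ p ∈ t, p.Prime)
    {x : M} (hxs : (∏ p ∈ s, (p : ℤ)) • x ∈ L) (hxt : (∏ p ∈ t, (p : ℤ)) • x ∈ L') :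
    (∏ p ∈ s ∩ t, (p : ℤ)) • x ∈ L ⊔ L' := by
  have hcop : IsCoprime (∏ p ∈ s \ t, (p : ℤ)) (∏ p ∈ t \ s, (p : ℤ)) := by
    refine IsCoprime.prod_left fun p hp => IsCoprime.prod_right fun q hq => ?_
    rw [Finset.mem_sdiff] at hp hq
    refine Nat.isCoprime_iff_coprime.2 ((Nat.coprime_primes (hs p hp.1) (ht q hq.1)).2 ?_)
    rintro rfl
    exact hp.2 hq.1
  obtain ⟨a, b, hab⟩ := hcop
  have hbezout : a * ∏ p ∈ s, (p : ℤ) + b * ∏ p ∈ t, (p : ℤ) = ∏ p ∈ s ∩ t, (p : ℤ) := by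
    rw [← Finset.prod_inter_mul_prod_sdiff s t, ← Finset.prod_inter_mul_prod_sdiff t s,
      Finset.inter_comm t s]
    linear_combination (∏ p ∈ s ∩ t, (p : ℤ)) * hab
  rw [← hbezout, add_smul, mul_smul, mul_smul]
  exact Submodule.add_mem_sup (L.smul_mem a hxs) (L'.smul_mem b hxt)

theorem prod_smul_mem_sup_of_mem_sqfreeHull (hA : ∀ p ∈ A, p.Prime) (hB : ∀ p ∈ B, p.Prime)
    {E : Finset ℕ} (hE : A ∩ B ⊆ E) {x : M} (hxA : x ∈ sqfreeHull A L)
    (hxB : x ∈ sqfreeHull B L') : (∏ p ∈ E, (p : ℤ)) • x ∈ L ⊔ L' := by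
  obtain ⟨s, hs, hxs⟩ := hxA
  obtain ⟨t, ht, hxt⟩ := hxB
  have hst : s ∩ t ⊆ E := fun p hp =>
    hE ⟨hs (Finset.mem_inter.1 hp).1, ht (Finset.mem_inter.1 hp).2⟩
  exact prod_smul_mem_of_subset hst (prod_inter_smul_mem_sup
    (fun p hp => hA p (hs hp)) (fun p hp => hB p (ht hp)) hxs hxt)

variable {ι : Type*} {P : ι → Set ℕ}

/-- The direct sum, over all `i`, of the groups of rational numbers whose denominator is a product
of distinct elements of `P i`. -/
noncomputable def fractionSum (P : ι → Set ℕ) : Submodule ℤ (ι →₀ ℚ) :=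
  ⨅ i, (sqfreeHull (P i) 1).comap (Finsupp.lapply i)

theorem mem_fractionSum {u : ι →₀ ℚ} : u ∈ fractionSum P ↔ ∀ i, u i ∈ sqfreeHull (P i) 1 := by
  simp only [fractionSum, Submodule.mem_iInf, Submodule.mem_comap, Finsupp.lapply_apply]

theorem mem_sqfreeHull_of_mem_fractionSum {u : ι →₀ ℚ} (hu : u ∈ fractionSum P) {C : Set ι}
    (hC : ↑u.support ⊆ C) :
    u ∈ sqfreeHull (⋃ i ∈ C, P i)
      (Submodule.span ℤ ((fun i => Finsupp.single i (1 : ℚ)) '' C)) := by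
  rw [← Finsupp.sum_single u]
  refine Submodule.sum_mem _ fun i hi => ?_
  refine sqfreeHull_mono_left (Set.subset_biUnion_of_mem (u := P) (hC hi)) ?_
  have hle : 1 ≤ (Submodule.span ℤ ((fun i => Finsupp.single i (1 : ℚ)) '' C)).comap
      (Finsupp.lsingle i) :=
    Submodule.one_le.2 (Submodule.subset_span ⟨i, hC hi, rfl⟩)
  have hui := sqfreeHull_mono_right hle (mem_fractionSum.1 hu i)
  rwa [← comap_sqfreeHull] at hui

end SqfreeHull

/-! ### Submodules defined by supports -/

theorem exists_countable_superset_forall_subset_iff {α ι κ : Type*} (σ : α → Finset ι)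
    (τ : α → Finset κ) (hσ : ∀ C : Set ι, C.Countable → {a | ↑(σ a) ⊆ C}.Countable)
    (hτ : ∀ D : Set κ, D.Countable → {a | ↑(τ a) ⊆ D}.Countable) {C₀ : Set ι}
    (hC₀ : C₀.Countable) :
    ∃ (C : Set ι) (D : Set κ), C₀ ⊆ C ∧ C.Countable ∧ ∀ a, ↑(σ a) ⊆ C ↔ ↑(τ a) ⊆ D := by
  let forth : Set ι → Set κ := fun C => ⋃ a ∈ {a | ↑(σ a) ⊆ C}, τ a
  let back : Set κ → Set ι := fun D => ⋃ a ∈ {a | ↑(τ a) ⊆ D}, σ a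
  let C : ℕ → Set ι := Nat.rec C₀ fun _ C => C ∪ back (forth C)
  have hforth : Monotone forth := fun C C' h =>
    Set.biUnion_subset_biUnion_left fun _ ha => Set.Subset.trans ha h
  have hCmono : Monotone C := monotone_nat_of_le_succ fun n => Set.subset_union_left
  have hCcount : ∀ n, (C n).Countable := by
    intro n
    induction n with
    | zero => exact hC₀
    | succ n ih =>
      exact ih.union ((hτ _ ((hσ _ ih).biUnion fun a _ => (τ a).countable_toSet)).biUnion
        fun a _ => (σ a).countable_toSet)
  refine ⟨⋃ n, C n, ⋃ n, forth (C n), Set.subset_iUnion C 0, Set.countable_iUnion hCcount,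
    fun a => ⟨fun ha => ?_, fun ha => ?_⟩⟩
  · obtain ⟨n, hn⟩ := hCmono.directed_le.exists_mem_subset_of_finset_subset_biUnion ha
    exact (Set.subset_biUnion_of_mem (u := fun a => (τ a : Set κ)) hn).trans
      (Set.subset_iUnion (fun n => forth (C n)) n)
  · obtain ⟨n, hn⟩ :=
      (hforth.comp hCmono).directed_le.exists_mem_subset_of_finset_subset_biUnion ha
    exact (Set.subset_biUnion_of_mem (u := fun a => (σ a : Set ι)) hn).trans
      (Set.subset_union_right.trans (Set.subset_iUnion C (n + 1)))

theorem countable_of_countable_ker {R M V : Type*} [Ring R] [AddCommGroup M] [AddCommGroup V]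
    [Module R M] [Module R V] [Countable V] (g : M →ₗ[R] V) [Countable g.ker] : Countable M := by
  let K := g.ker.toAddSubgroup
  have : Countable (M ⧸ K) := g.quotKerEquivRange.injective.countable
  have : Countable K := ‹Countable g.ker›
  exact (AddSubgroup.addGroupEquivQuotientProdAddSubgroup (s := K)).injective.countable

section Support

variable {R M V W ι κ : Type*} [Ring R] [AddCommGroup M] [AddCommGroup V] [AddCommGroup W]
  [Module R M] [Module R V] [Module R W] {v : M →ₗ[R] (ι →₀ V)} {w : M →ₗ[R] (κ →₀ W)}

/-- The elements whose `v`-support is contained in `C`. -/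
noncomputable def suppIn (v : M →ₗ[R] (ι →₀ V)) (C : Set ι) : Submodule R M :=
  (Finsupp.supported V R C).comap v

/-- The union of the `v`-supports of the elements of `N`. -/
def suppUnion (v : M →ₗ[R] (ι →₀ V)) (N : Submodule R M) : Set ι :=
  ⋃ x ∈ N, (v x).support

theorem mem_suppIn {C : Set ι} {x : M} : x ∈ suppIn v C ↔ ↑(v x).support ⊆ C := Iff.rfl

theorem gc_suppUnion_suppIn (v : M →ₗ[R] (ι →₀ V)) :
    GaloisConnection (suppUnion v) (suppIn v) :=
  fun _ _ => Set.iUnion₂_subset_iff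

theorem suppIn_empty (hv : Function.Injective v) : suppIn v ∅ = ⊥ := by
  rw [suppIn, Finsupp.supported_empty, Submodule.comap_bot, LinearMap.ker_eq_bot.2 hv]

theorem sSup_mem_range_suppIn {c : Set (Submodule R M)} (hc : c ⊆ Set.range (suppIn v))
    (hchain : IsChain (· ≤ ·) c) (hne : c.Nonempty) : sSup c ∈ Set.range (suppIn v) := by
  have := hne.to_subtype
  have hclosed : ∀ N ∈ c, suppIn v (suppUnion v N) = N := by
    intro N hN
    obtain ⟨C, rfl⟩ := hc hN
    exact (gc_suppUnion_suppIn v).u_l_u_eq_u C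
  refine ⟨⋃ N : c, suppUnion v N, le_antisymm (fun x hx => ?_) (sSup_le fun N hN => ?_)⟩
  · have hdir : Directed (· ≤ ·) fun N : c => suppUnion v N :=
      Directed.mono_comp (· ≤ ·) (g := suppUnion v) (gc_suppUnion_suppIn v).monotone_l
        hchain.directed
    obtain ⟨N, hN⟩ := hdir.exists_mem_subset_of_finset_subset_biUnion (mem_suppIn.1 hx)
    exact le_sSup N.2 (hclosed N N.2 ▸ hN)
  · exact (gc_suppUnion_suppIn v).le_u (Set.subset_iUnion (fun N : c => suppUnion v N) ⟨N, hN⟩)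

theorem countable_suppIn [Countable V] [Countable v.ker] {C : Set ι} (hC : C.Countable) :
    Countable (suppIn v C) := by
  have := hC.to_subtype
  let g : suppIn v C →ₗ[R] Finsupp.supported V R C := v.restrict fun _ hx => hx
  have : Countable (Finsupp.supported V R C) :=
    (Finsupp.supportedEquivFinsupp (M := V) (R := R) C).injective.countable
  have hker : ∀ x : g.ker, v x.1 = 0 := fun x => congrArg Subtype.val x.2
  have : Countable g.ker :=
    Function.Injective.countable (f := fun x : g.ker => (⟨x.1, hker x⟩ : v.ker))
      fun _ _ hxy => Subtype.ext (Subtype.ext (Subtype.mk_eq_mk.1 hxy))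
  exact countable_of_countable_ker g

theorem exists_countable_suppIn_eq_suppIn [Countable V] [Countable W]
    (v : M →ₗ[R] (ι →₀ V)) (w : M →ₗ[R] (κ →₀ W)) [Countable v.ker] [Countable w.ker]
    {C₀ : Set ι} (hC₀ : C₀.Countable) :
    ∃ C D, C₀ ⊆ C ∧ C.Countable ∧ suppIn v C = suppIn w D := by
  obtain ⟨C, D, hC₀C, hC, hCD⟩ := exists_countable_superset_forall_subset_iff
    (fun x => (v x).support) (fun x => (w x).support)
    (fun C hC => (Set.countable_coe_iff.1 (countable_suppIn (v := v) hC)))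
    (fun D hD => (Set.countable_coe_iff.1 (countable_suppIn (v := w) hD))) hC₀
  exact ⟨C, D, hC₀C, hC, Submodule.ext hCD⟩

theorem exists_injective_deleteCoords {N : Submodule R M} {C : Set ι} (hN : suppIn v C = N) :
    ∃ v' : M ⧸ N →ₗ[R] (↥Cᶜ →₀ V), Function.Injective v' ∧ ∀ x i, v' (N.mkQ x) i = v x i := by
  subst hN
  let π : M →ₗ[R] (↥Cᶜ →₀ V) := Finsupp.lsubtypeDomain Cᶜ ∘ₗ v
  have hker : π.ker = suppIn v C := by
    ext x
    rw [suppIn, Submodule.mem_comap, Finsupp.mem_supported', LinearMap.mem_ker, Finsupp.ext_iff]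
    exact Subtype.forall
  exact ⟨(suppIn v C).liftQ π hker.ge,
    LinearMap.ker_eq_bot.1 (Submodule.ker_liftQ_eq_bot' _ _ hker.symm), fun x i => rfl⟩

theorem comap_suppIn {N : Submodule R M} {C : Set ι} {v' : M ⧸ N →ₗ[R] (↥Cᶜ →₀ V)}
    (hv' : ∀ x i, v' (N.mkQ x) i = v x i) (C' : Set ↥Cᶜ) :
    (suppIn v' C').comap N.mkQ = suppIn v (C ∪ Subtype.val '' C') := by
  ext x
  simp only [suppIn, Submodule.mem_comap, Finsupp.mem_supported', hv', Subtype.forall]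
  refine forall_congr' fun i => ?_
  by_cases hi : i ∈ C <;> simp [hi]

theorem exists_gt_countable_map_mkQ [Countable V] [Countable W] {N : Submodule R M}
    (hNv : N ∈ Set.range (suppIn v)) (hNw : N ∈ Set.range (suppIn w)) (hN : N ≠ ⊤) :
    ∃ N' ∈ Set.range (suppIn v) ∩ Set.range (suppIn w), N < N' ∧ Countable (N'.map N.mkQ) := by
  obtain ⟨x, hx⟩ : ∃ x, x ∉ N := by simpa [Submodule.eq_top_iff'] using hN
  obtain ⟨C, hC⟩ := hNv
  obtain ⟨D, hD⟩ := hNw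
  obtain ⟨v', hv'inj, hv'⟩ := exists_injective_deleteCoords hC
  obtain ⟨w', hw'inj, hw'⟩ := exists_injective_deleteCoords hD
  have : Countable v'.ker := by rw [LinearMap.ker_eq_bot.2 hv'inj]; infer_instance
  have : Countable w'.ker := by rw [LinearMap.ker_eq_bot.2 hw'inj]; infer_instance
  obtain ⟨C', D', hxC', hC', hCD'⟩ :=
    exists_countable_suppIn_eq_suppIn v' w' (v' (N.mkQ x)).support.countable_toSet
  refine ⟨(suppIn v' C').comap N.mkQ,
    ⟨⟨_, (comap_suppIn hv' C').symm⟩, ⟨_, by rw [hCD', comap_suppIn hw']⟩⟩,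
    lt_of_le_of_ne (N.le_comap_mkQ _) fun h => hx (h ▸ hxC'), ?_⟩
  rw [Submodule.map_comap_eq_of_surjective N.mkQ_surjective]
  exact countable_suppIn hC'

end Support

theorem exists_finite_pureClosure_le_suppIn {R M V ι : Type*} [CommRing R] [IsDomain R]
    [AddCommGroup M] [AddCommGroup V] [Module R M] [Module R V] [Module.IsTorsionFree R V]
    (v : M →ₗ[R] (ι →₀ V)) {N : Submodule R M} (hN : N.FG) :
    ∃ C : Set ι, C.Finite ∧ pureClosure N ≤ suppIn v C := by
  obtain ⟨T, rfl⟩ := hN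
  refine ⟨⋃ x ∈ T, (v x).support, T.finite_toSet.biUnion fun x _ => Finset.finite_toSet _,
    fun x hx => ?_⟩
  have hspan : Submodule.span R T ≤ suppIn v (⋃ x ∈ T, (v x).support) :=
    Submodule.span_le.2 fun x hx =>
      Set.subset_biUnion_of_mem (u := fun x => ((v x).support : Set ι)) hx
  obtain ⟨r, hr, hrx⟩ := mem_pureClosure.1 hx
  have := mem_suppIn.1 (hspan hrx)
  rwa [map_smul, Finsupp.support_smul_eq hr] at this

/-! ### Groups embedded in two sums of rational groups -/

section TwoSums

variable {M ι κ : Type*} [AddCommGroup M] {P : ι → Set ℕ} {Q : κ → Set ℕ}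
  {v : M →ₗ[ℤ] (ι →₀ ℚ)} {w : M →ₗ[ℤ] (κ →₀ ℚ)}

theorem fg_comap_span_single (hv : Function.Injective v) {C : Set ι} (hC : C.Finite) :
    ((Submodule.span ℤ ((fun i => Finsupp.single i (1 : ℚ)) '' C)).comap v).FG :=
  Submodule.fg_of_fg_map_injective v hv
    ((Submodule.fg_span (hC.image _)).of_le (Submodule.map_comap_le v _))

theorem fg_suppIn_inf_suppIn (hP : ∀ i, ∀ p ∈ P i, p.Prime) (hQ : ∀ j, ∀ q ∈ Q j, q.Prime)
    (hPQ : ∀ i j, (P i ∩ Q j).Finite) (hv : Function.Injective v) (hw : Function.Injective w)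
    (hvP : ∀ x, v x ∈ fractionSum P) (hwQ : ∀ x, w x ∈ fractionSum Q) {C : Set ι} {D : Set κ}
    (hC : C.Finite) (hD : D.Finite) : (suppIn v C ⊓ suppIn w D).FG := by
  have hfin : ((⋃ i ∈ C, P i) ∩ ⋃ j ∈ D, Q j).Finite := by
    simp only [Set.iUnion₂_inter, Set.inter_iUnion₂]
    exact hD.biUnion fun j _ => hC.biUnion fun i _ => hPQ i j
  set Lv := (Submodule.span ℤ ((fun i => Finsupp.single i (1 : ℚ)) '' C)).comap v
  set Lw := (Submodule.span ℤ ((fun j => Finsupp.single j (1 : ℚ)) '' D)).comap w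
  set e : ℤ := ∏ p ∈ hfin.toFinset, (p : ℤ)
  have he : e ≠ 0 := by
    refine Finset.prod_ne_zero_iff.2 fun p hp => Nat.cast_ne_zero.2 ?_
    obtain ⟨i, -, hpi⟩ := Set.mem_iUnion₂.1 (hfin.mem_toFinset.1 hp).1
    exact (hP i p hpi).ne_zero
  have hmul : suppIn v C ⊓ suppIn w D ≤ (Lv ⊔ Lw).comap (LinearMap.lsmul ℤ M e) := by
    rintro x ⟨hxC, hxD⟩
    have hxv : x ∈ sqfreeHull (⋃ i ∈ C, P i) Lv := by
      rw [← comap_sqfreeHull]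
      exact mem_sqfreeHull_of_mem_fractionSum (hvP x) hxC
    have hxw : x ∈ sqfreeHull (⋃ j ∈ D, Q j) Lw := by
      rw [← comap_sqfreeHull]
      exact mem_sqfreeHull_of_mem_fractionSum (hwQ x) hxD
    refine prod_smul_mem_sup_of_mem_sqfreeHull ?_ ?_ hfin.coe_toFinset.ge hxv hxw
    · simpa only [Set.mem_iUnion₂] using fun p ⟨i, _, hp⟩ => hP i p hp
    · simpa only [Set.mem_iUnion₂] using fun q ⟨j, _, hq⟩ => hQ j q hq
  have : Module.IsTorsionFree ℤ M := hv.moduleIsTorsionFree v (map_smul v)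
  exact Submodule.fg_of_fg_map_injective (LinearMap.lsmul ℤ M e) (smul_right_injective M he)
    (((fg_comap_span_single hv hC).sup (fg_comap_span_single hw hD)).of_le
      (Submodule.map_le_iff_le_comap.2 hmul))

theorem free_of_countable_of_mem_fractionSum [Countable M] (hP : ∀ i, ∀ p ∈ P i, p.Prime)
    (hQ : ∀ j, ∀ q ∈ Q j, q.Prime) (hPQ : ∀ i j, (P i ∩ Q j).Finite) (hv : Function.Injective v)
    (hw : Function.Injective w) (hvP : ∀ x, v x ∈ fractionSum P)
    (hwQ : ∀ x, w x ∈ fractionSum Q) : Module.Free ℤ M := by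
  have : Module.IsTorsionFree ℤ M := hv.moduleIsTorsionFree v (map_smul v)
  refine free_of_countable_of_fg_pureClosure fun N hN => ?_
  obtain ⟨C, hC, hNC⟩ := exists_finite_pureClosure_le_suppIn v hN
  obtain ⟨D, hD, hND⟩ := exists_finite_pureClosure_le_suppIn w hN
  exact (fg_suppIn_inf_suppIn hP hQ hPQ hv hw hvP hwQ hC hD).of_le (le_inf hNC hND)

theorem mem_fractionSum_deleteCoords (hvP : ∀ x, v x ∈ fractionSum P) {N : Submodule ℤ M}
    {C : Set ι} {v' : M ⧸ N →ₗ[ℤ] (↥Cᶜ →₀ ℚ)} (hv' : ∀ x i, v' (N.mkQ x) i = v x i) (y : M ⧸ N) :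
    v' y ∈ fractionSum fun i : ↥Cᶜ => P i := by
  obtain ⟨x, rfl⟩ := N.mkQ_surjective y
  exact mem_fractionSum.2 fun i => hv' x i ▸ mem_fractionSum.1 (hvP x) i

theorem free_of_injective_of_mem_fractionSum (hP : ∀ i, ∀ p ∈ P i, p.Prime)
    (hQ : ∀ j, ∀ q ∈ Q j, q.Prime) (hPQ : ∀ i j, (P i ∩ Q j).Finite) (hv : Function.Injective v)
    (hw : Function.Injective w) (hvP : ∀ x, v x ∈ fractionSum P)
    (hwQ : ∀ x, w x ∈ fractionSum Q) : Module.Free ℤ M := by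
  refine free_of_devissage (Set.range (suppIn v) ∩ Set.range (suppIn w))
    ⟨⟨∅, suppIn_empty hv⟩, ⟨∅, suppIn_empty hw⟩⟩
    (fun c hc hchain hne =>
      ⟨sSup_mem_range_suppIn (hc.trans Set.inter_subset_left) hchain hne,
        sSup_mem_range_suppIn (hc.trans Set.inter_subset_right) hchain hne⟩)
    fun N hN hNtop => ?_
  obtain ⟨N', hN', hlt, hcount⟩ := exists_gt_countable_map_mkQ hN.1 hN.2 hNtop
  obtain ⟨⟨C, hC⟩, ⟨D, hD⟩⟩ := hN
  obtain ⟨v', hv'inj, hv'⟩ := exists_injective_deleteCoords hC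
  obtain ⟨w', hw'inj, hw'⟩ := exists_injective_deleteCoords hD
  exact ⟨N', hN', hlt, free_of_countable_of_mem_fractionSum
    (v := v' ∘ₗ (N'.map N.mkQ).subtype) (w := w' ∘ₗ (N'.map N.mkQ).subtype)
    (fun i => hP i) (fun j => hQ j) (fun i j => hPQ i j)
    (hv'inj.comp Subtype.val_injective) (hw'inj.comp Subtype.val_injective)
    (fun y => mem_fractionSum_deleteCoords hvP hv' y)
    (fun y => mem_fractionSum_deleteCoords hwQ hw' y)⟩

theorem free_of_countable_ker_of_mem_fractionSum (hP : ∀ i, ∀ p ∈ P i, p.Prime)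
    (hQ : ∀ j, ∀ q ∈ Q j, q.Prime) (hPQ : {i | ∃ j, ¬(P i ∩ Q j).Finite}.Countable)
    [Countable v.ker] [Countable w.ker] (hvP : ∀ x, v x ∈ fractionSum P)
    (hwQ : ∀ x, w x ∈ fractionSum Q)
    (hfree : ∀ N : Submodule ℤ M, Countable N → Module.Free ℤ N) : Module.Free ℤ M := by
  obtain ⟨C, D, hPQC, hC, hCD⟩ := exists_countable_suppIn_eq_suppIn v w hPQ
  obtain ⟨v', hv'inj, hv'⟩ := exists_injective_deleteCoords (rfl : suppIn v C = suppIn v C)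
  obtain ⟨w', hw'inj, hw'⟩ := exists_injective_deleteCoords hCD.symm
  have hfinite : ∀ (i : ↥Cᶜ) (j : ↥Dᶜ), (P i ∩ Q j).Finite := fun i j =>
    not_not.1 fun hinf => i.2 (hPQC ⟨j, hinf⟩)
  have : Module.Free ℤ (suppIn v C) := hfree _ (countable_suppIn hC)
  have : Module.Free ℤ (M ⧸ suppIn v C) := free_of_injective_of_mem_fractionSum
    (fun i : ↥Cᶜ => hP i) (fun j : ↥Dᶜ => hQ j) hfinite hv'inj hw'inj
    (mem_fractionSum_deleteCoords hvP hv') (mem_fractionSum_deleteCoords hwQ hw')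
  exact free_of_quotient (suppIn v C)

end TwoSums

/-! ### Coordinates on `G_S` -/

section Coordinates

open Filter

variable {X : Type*} {P : X → Set ℕ} {f : X → ℕ → ℤ} {S : Set X}

/-- The independence property of a family of functions `ℕ → ℤ`: finitely many distinct members
take any prescribed values simultaneously at infinitely many arguments. -/
def IsIndependentFamily (f : X → ℕ → ℤ) : Prop :=
  ∀ (k : ℕ) (ηs : Fin k → X) (a : Fin k → ℤ), Function.Injective ηs →
    {i : ℕ | ∀ l, f (ηs l) i = a l}.Infinite

theorem IsIndependentFamily.frequently_eq (hf : IsIndependentFamily f) (s : Finset X)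
    (a : X → ℤ) : ∃ᶠ i in atTop, ∀ η ∈ s, f η i = a η := by
  let e := s.equivFin.symm
  refine (Nat.frequently_atTop_iff_infinite.2 (hf s.card (fun l => e l) (fun l => a (e l))
    (Subtype.val_injective.comp e.injective))).mono fun i hi η hη => ?_
  simpa using hi (e.symm ⟨η, hη⟩)

/-- The germ at infinity of an integer sequence, as a germ of rational sequences so that linear
combinations over `ℚ` make sense. -/
noncomputable def ratGerm : (ℕ → ℤ) →ₗ[ℤ] Germ (atTop : Filter ℕ) ℚ :=
  ((Germ.coeAddHom atTop).comp ((Int.castAddHom ℚ).compLeft ℕ)).toIntLinearMap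

theorem ratGerm_apply (g : ℕ → ℤ) : ratGerm g = ((fun i => (g i : ℚ) : ℕ → ℚ) : Germ atTop ℚ) :=
  rfl

theorem ratGerm_eq_zero_iff {g : ℕ → ℤ} : ratGerm g = 0 ↔ g ∈ Zomega := by
  rw [ratGerm_apply, ← Germ.coe_zero, Germ.coe_eq, ← Nat.cofinite_eq_atTop, EventuallyEq,
    eventually_cofinite]
  simp only [Pi.zero_apply, Int.cast_eq_zero]
  rfl

theorem countable_Zomega : (Zomega : Set (ℕ → ℤ)).Countable := by
  refine (Set.countable_range fun u : ℕ →₀ ℤ => (u : ℕ → ℤ)).mono fun g hg => ?_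
  exact ⟨Finsupp.ofSupportFinite g hg, rfl⟩

theorem xv_zero_ne_zero (hP : ∀ η, ∀ p ∈ P η, p.Prime) {η : X} {i : ℕ} (hi : f η i ≠ 0) :
    xv P f η 0 i ≠ 0 :=
  mul_ne_zero (Finset.prod_ne_zero_iff.2 fun p hp =>
    Nat.cast_ne_zero.2 (hP η p (Finset.mem_filter.1 hp).2.1).ne_zero) hi

theorem linearIndependent_ratGerm_xv (hP : ∀ η, ∀ p ∈ P η, p.Prime) (hf : IsIndependentFamily f) :
    LinearIndependent ℚ fun η => ratGerm (xv P f η 0) := by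
  refine linearIndependent_iff'.2 fun s c hc η hη => ?_
  have hsum : ∀ᶠ i in atTop, ∑ ν ∈ s, c ν * (xv P f ν 0 i : ℚ) = 0 := by
    have hcoe : ((∑ ν ∈ s, c ν • fun i => (xv P f ν 0 i : ℚ) : ℕ → ℚ) : Germ atTop ℚ) =
        ∑ ν ∈ s, c ν • ratGerm (xv P f ν 0) := map_sum (Germ.coeAddHom atTop) _ _
    rw [hc, ← Germ.coe_zero, Germ.coe_eq] at hcoe
    filter_upwards [hcoe] with i hi
    simpa only [Finset.sum_apply, Pi.smul_apply, smul_eq_mul, Pi.zero_apply] using hi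
  obtain ⟨i, hi, h0⟩ :=
    ((hf.frequently_eq s fun ν => if ν = η then 1 else 0).and_eventually hsum).exists
  rw [Finset.sum_eq_single_of_mem η hη fun ν hν hne => by
    rw [xv, hi ν hν, if_neg hne, mul_zero, Int.cast_zero, mul_zero]] at h0
  refine (mul_eq_zero.1 h0).resolve_right (Int.cast_ne_zero.2 (xv_zero_ne_zero hP ?_))
  rw [hi η hη, if_pos rfl]
  exact one_ne_zero

theorem prod_mul_xv (P : X → Set ℕ) (f : X → ℕ → ℤ) (η : X) {i j : ℕ} (hij : j ≤ i) :
    (∏ p ∈ (Finset.range j).filter (· ∈ P η), (p : ℤ)) * xv P f η j i = xv P f η 0 i := by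
  simp only [xv, ← mul_assoc]
  rw [← Finset.prod_union]
  · congr 2
    ext p
    simp only [Finset.mem_union, Finset.mem_filter, Finset.mem_range]
    grind
  · refine Finset.disjoint_left.2 fun p hp hp' => ?_
    simp only [Finset.mem_filter, Finset.mem_range] at hp hp'
    exact hp'.2.2.not_gt hp.1

theorem prod_smul_ratGerm_xv (P : X → Set ℕ) (f : X → ℕ → ℤ) (η : X) (j : ℕ) :
    (∏ p ∈ (Finset.range j).filter (· ∈ P η), (p : ℤ)) • ratGerm (xv P f η j) =
      ratGerm (xv P f η 0) := by
  rw [← map_smul, ratGerm_apply, ratGerm_apply, Germ.coe_eq]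
  filter_upwards [eventually_ge_atTop j] with i hi
  rw [Pi.smul_apply, smul_eq_mul, prod_mul_xv P f η hi]

theorem ratGerm_xv_mem_map_fractionSum (hP : ∀ η, ∀ p ∈ P η, p.Prime) (η : S) (j : ℕ) :
    ratGerm (xv P f η j) ∈ (fractionSum fun η : S => P η).map
      ((Finsupp.linearCombination ℚ fun η : S => ratGerm (xv P f η 0)).restrictScalars ℤ) := by
  set s := (Finset.range j).filter (· ∈ P η)
  have hs : (∏ p ∈ s, (p : ℚ)) ≠ 0 := Finset.prod_ne_zero_iff.2 fun p hp =>
    Nat.cast_ne_zero.2 (hP η p (Finset.mem_filter.1 hp).2).ne_zero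
  refine ⟨Finsupp.single η (∏ p ∈ s, (p : ℚ))⁻¹, mem_fractionSum.2 fun ν => ?_, ?_⟩
  · obtain rfl | hne := eq_or_ne ν η
    · refine ⟨s, fun p hp => (Finset.mem_filter.1 hp).2, 1, ?_⟩
      simp [hs]
    · rw [Finsupp.single_eq_of_ne hne]
      exact zero_mem _
  · rw [LinearMap.restrictScalars_apply, Finsupp.linearCombination_single,
      ← prod_smul_ratGerm_xv P f η j, inv_smul_eq_iff₀ hs, ← Int.cast_smul_eq_zsmul ℚ]
    push_cast
    rfl

theorem ratGerm_mem_map_fractionSum (hP : ∀ η, ∀ p ∈ P η, p.Prime) {g : ℕ → ℤ}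
    (hg : g ∈ GS P f S) :
    ratGerm g ∈ (fractionSum fun η : S => P η).map
      ((Finsupp.linearCombination ℚ fun η : S => ratGerm (xv P f η 0)).restrictScalars ℤ) := by
  suffices h : GS P f S ≤ (Submodule.comap ratGerm (Submodule.map _ _)).toAddSubgroup from h hg
  refine (AddSubgroup.closure_le _).2 ?_
  rintro g (hg | ⟨η, hη, j, rfl⟩)
  · simp only [SetLike.mem_coe, Submodule.mem_toAddSubgroup, Submodule.mem_comap,
      ratGerm_eq_zero_iff.2 hg, zero_mem]
  · exact ratGerm_xv_mem_map_fractionSum hP ⟨η, hη⟩ j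

theorem exists_coords_of_mem_GS {H : Type*} [AddCommGroup H] (hP : ∀ η, ∀ p ∈ P η, p.Prime)
    (hf : IsIndependentFamily f) {φ : H →+ (ℕ → ℤ)} (hφ : Function.Injective φ)
    (hφS : ∀ h, φ h ∈ GS P f S) :
    ∃ v : H →ₗ[ℤ] (S →₀ ℚ), (∀ h, v h ∈ fractionSum fun η : S => P η) ∧ Countable v.ker := by
  set Φ := (Finsupp.linearCombination ℚ fun η : S => ratGerm (xv P f η 0)).restrictScalars ℤ
  have hΦ : Function.Injective Φ :=
    (linearIndependent_ratGerm_xv hP hf).comp _ Subtype.val_injective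
  choose v hv hΦv using fun h => ratGerm_mem_map_fractionSum hP (hφS h)
  have hadd : ∀ a b, v (a + b) = v a + v b := fun a b => hΦ <| by
    rw [map_add, hΦv, hΦv, hΦv, map_add, map_add]
  refine ⟨(AddMonoidHom.mk' v hadd).toIntLinearMap, hv, ?_⟩
  have hker : ∀ h : (AddMonoidHom.mk' v hadd).toIntLinearMap.ker, φ h ∈ Zomega := by
    rintro ⟨h, hh : v h = 0⟩
    rw [← ratGerm_eq_zero_iff, ← hΦv, hh, map_zero]
  have := countable_Zomega.to_subtype
  exact Function.Injective.countable (f := fun h => (⟨φ h, hker h⟩ : Zomega))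
    fun _ _ h => Subtype.ext (hφ (congrArg Subtype.val h))

end Coordinates

/-! ### Almost disjointness -/

theorem Geta_eq_GS (P : BinSeqLt → Set ℕ) (f : BinSeqLt → ℕ → ℤ) (η : Set.Iio omega1 → Bool) :
    Geta P f η = GS P f (Set.range (restrictSeq η)) := by
  simp only [Geta, GS, Set.exists_range_iff]

theorem countable_Iic_of_Iio_omega1 (δ : Set.Iio omega1) : (Set.Iic δ).Countable := by
  have hδ : Order.succ δ.1 < omega1 :=
    (Cardinal.isSuccLimit_ord (Cardinal.aleph0_le_aleph 1)).succ_lt δ.2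
  have hcount : (Set.Iio (Order.succ δ.1)).Countable := by
    rw [← Cardinal.le_aleph0_iff_set_countable, Cardinal.mk_Iio_ordinal, Cardinal.lift_le_aleph0,
      ← Cardinal.lt_aleph_one_iff]
    exact Cardinal.lt_ord.1 hδ
  refine (hcount.preimage_of_injOn (f := Subtype.val) Subtype.val_injective.injOn).mono
    fun α (hα : α ≤ δ) => ?_
  exact Order.lt_succ_iff.2 (show α.1 ≤ δ.1 from hα)

theorem eq_of_restrictSeq_eq {η₁ η₂ : Set.Iio omega1 → Bool} {α β δ : Set.Iio omega1}
    (h : restrictSeq η₁ α = restrictSeq η₂ β) (hδ : δ < α) : η₁ δ = η₂ δ := by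
  obtain ⟨α, hα⟩ := α
  obtain ⟨β, hβ⟩ := β
  obtain ⟨rfl, hfun⟩ := Sigma.mk.inj (congrArg Subtype.val h)
  exact congrFun (eq_of_heq hfun) ⟨δ.1, hδ⟩

theorem countable_range_restrictSeq_inter {η₁ η₂ : Set.Iio omega1 → Bool} (hne : η₁ ≠ η₂) :
    (Set.range (restrictSeq η₁) ∩ Set.range (restrictSeq η₂)).Countable := by
  obtain ⟨δ, hδ⟩ := Function.ne_iff.1 hne
  refine ((countable_Iic_of_Iio_omega1 δ).image (restrictSeq η₁)).mono ?_
  rintro _ ⟨⟨α, rfl⟩, ⟨β, hβ⟩⟩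
  exact ⟨α, not_lt.1 fun hlt => hδ (eq_of_restrictSeq_eq hβ.symm hlt), rfl⟩

section AlmostDisjoint

variable {X : Type*} {P : X → Set ℕ} {f : X → ℕ → ℤ} {S T : Set X}

theorem free_of_injective_of_mem_GS {H : Type*} [AddCommGroup H] (hP : ∀ η, ∀ p ∈ P η, p.Prime)
    (hdisj : ∀ η ν, η ≠ ν → (P η ∩ P ν).Finite) (hf : IsIndependentFamily f)
    (hST : (S ∩ T).Countable) {φ ψ : H →+ (ℕ → ℤ)} (hφ : Function.Injective φ)
    (hφS : ∀ h, φ h ∈ GS P f S) (hψ : Function.Injective ψ) (hψT : ∀ h, ψ h ∈ GS P f T) :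
    Module.Free ℤ H := by
  obtain ⟨v, hv, hvker⟩ := exists_coords_of_mem_GS hP hf hφ hφS
  obtain ⟨w, hw, hwker⟩ := exists_coords_of_mem_GS hP hf hψ hψT
  have hcommon : {η : S | ∃ ν : T, ¬(P η ∩ P ν).Finite}.Countable := by
    refine (hST.preimage_of_injOn Subtype.val_injective.injOn).mono fun η ⟨ν, hinf⟩ => ?_
    have hην : η.1 = ν.1 := not_not.1 (mt (hdisj η ν) hinf)
    exact ⟨η.2, hην ▸ ν.2⟩
  exact free_of_countable_ker_of_mem_fractionSum (fun η : S => hP η) (fun ν : T => hP ν) hcommon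
    hv hw fun N _ => free_of_countable_of_injective (φ.toIntLinearMap ∘ₗ N.subtype)
      (hφ.comp Subtype.val_injective)

theorem stmt11_general (hP : ∀ η, ∀ p ∈ P η, p.Prime)
    (hdisj : ∀ η ν, η ≠ ν → (P η ∩ P ν).Finite) (hf : IsIndependentFamily f)
    (hST : (S ∩ T).Countable) :
    (∀ (H : Type*) [AddCommGroup H],
      (∃ φ : H →+ (ℕ → ℤ), Function.Injective φ ∧ ∀ h, φ h ∈ GS P f S) →
      (∃ ψ : H →+ (ℕ → ℤ), Function.Injective ψ ∧ ∀ h, ψ h ∈ GS P f T) →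
      Module.Free ℤ H) ∧
    Module.Free ℤ ↥(GS P f S ⊓ GS P f T) :=
  ⟨fun _ _ ⟨_, hφ, hφS⟩ ⟨_, hψ, hψT⟩ =>
      free_of_injective_of_mem_GS hP hdisj hf hST hφ hφS hψ hψT,
    free_of_injective_of_mem_GS hP hdisj hf hST
      (AddSubgroup.subtype_injective _) (fun h => h.2.1)
      (AddSubgroup.subtype_injective _) (fun h => h.2.2)⟩

end AlmostDisjoint

/-- for distinct `η₁ η₂ : ω₁ → {0,1}`, the groups `G_{η₁}` and
`G_{η₂}` are almost disjoint: every abelian group `H` isomorphic to a subgroup of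
`G_{η₁}` and to a subgroup of `G_{η₂}` is free.  In particular the intersection
`G_{η₁} ⊓ G_{η₂}` is free. -/
theorem stmt11
    (P : BinSeqLt → Set ℕ) (f : BinSeqLt → ℕ → ℤ)
    (hprime : ∀ η, ∀ p ∈ P η, p.Prime)
    (hinf : ∀ η, (P η).Infinite)
    (hdisj : ∀ η ν, η ≠ ν → (P η ∩ P ν).Finite)
    (hind : ∀ (k : ℕ) (ηs : Fin k → BinSeqLt) (a : Fin k → ℤ), Function.Injective ηs →
      {i : ℕ | ∀ l, f (ηs l) i = a l}.Infinite)
    (η₁ η₂ : Set.Iio omega1 → Bool) (hne : η₁ ≠ η₂) :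
    (∀ (H : Type) [AddCommGroup H],
      (∃ φ : H →+ (ℕ → ℤ), Function.Injective φ ∧ ∀ h, φ h ∈ Geta P f η₁) →
      (∃ ψ : H →+ (ℕ → ℤ), Function.Injective ψ ∧ ∀ h, ψ h ∈ Geta P f η₂) →
      Module.Free ℤ H) ∧
    Module.Free ℤ (↥(Geta P f η₁ ⊓ Geta P f η₂)) := by
  rw [Geta_eq_GS, Geta_eq_GS]
  exact stmt11_general hprime hdisj hind (countable_range_restrictSeq_inter hne)
end
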